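/- Let γ > 0, 1 < α < 2, p > 1, a > 0, b > 0, and let β ∈ [α/2, α). Suppose w ∈ C¹([0,∞)), w ≢ 0, the function t ↦ ₀I_t^{2−α}(w(s) − w'(0)s − w(0)) is in AC²([0,T]) for every T > 0, and for almost every t ≥ 0 one has (₀D_t^α w)(t) + a·w(t) ≥ b·(₀I_t^γ (|w|^p))(t). If w'(0) = 0, then liminf_{t→+∞} t^{1−γ−β}·(₀I_t^β w)(t) > 0. -/

import Mathlib

/-!
Write `α = 2μ` and let `K_σ(t) = t ^ (σ - 1) E_{α,σ}(-a t ^ α)` be the Mittag-Leffler kernels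
(`mittagKernel a α σ`). With `f = D^α w + a w` and `w'(0) = 0`, variation of constants gives
`I^β w = w(0) K_{β+1} + K_{α+β} * f` (`sub_eq_rlInt_caputoD`, `rlInt_eq_mittag`).

The kernel `K_{α+β}` is nonnegative for `β ≥ α / 2` (`mittag_nonneg`), so
`f ≥ b I^γ |w|^p` may be inserted: `I^β w ≥ w(0) K_{β+1} + b K_{α+β+γ} * |w|^p`. Since
`a K_{α+ν} = t ^ (ν - 1) / Γ(ν) - K_ν`, and `K_ν` is of lower order for `ν > μ` (`mittag_bound`), the
kernel `K_{α+β+γ}` is bounded below by a multiple of `t ^ (β + γ - 1)` for large `t`, and so is its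
convolution with `|w|^p`, which is nonnegative and not identically zero (`conv_mittag_lower`). The
term `w(0) K_{β+1}` is `o(t ^ (β + γ - 1))` by the same bound. This gives the claim.

Positivity and growth of `K_σ` come from the case `α = 2`, where the kernels of index `1`, `2`, `3` are
`cos (√a t)`, `sin (√a t) / √a`, `(1 - cos (√a t)) / a` and the others are fractional integrals of these.
They are carried to order `2μ` by `subordination`: integration against a positive kernel that maps
`τ ^ (κ - 1) / Γ(κ)` to `t ^ (μκ - 1) / Γ(μκ)` for every `κ > 0`. Instead of this kernel itself, explicit
positive densities `q_m` are used (`exists_subordinator`), for which the image has `1 / Γ(μκ)` replaced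
by the `m`-th approximant of Euler's product; a bound on these approximants that is uniform in `m`
(`risingCoeff_le_geom`) allows `m → ∞` inside the series.
-/

open MeasureTheory Filter

/-- Riemann–Liouville fractional integral of order `σ` based at `0`:
`(₀I_t^σ f)(t) = (1/Γ(σ)) ∫₀ᵗ (t−s)^{σ−1} f(s) ds`. -/
noncomputable def rlInt (σ : ℝ) (f : ℝ → ℝ) (t : ℝ) : ℝ :=
  (1 / Real.Gamma σ) * ∫ s in (0:ℝ)..t, (t - s) ^ (σ - 1) * f s

/-- The function whose second derivative is the (left) Caputo derivative of order `α ∈ (1,2]`: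
for `α < 2` it is `₀I_t^{2−α}(w(s) − w'(0)·s − w(0))`, and for `α = 2` it is `w` itself. -/
noncomputable def capKernel (α : ℝ) (w : ℝ → ℝ) : ℝ → ℝ :=
  if α = 2 then w else rlInt (2 - α) (fun s => w s - deriv w 0 * s - w 0)

/-- Left Caputo fractional derivative of order `α ∈ (1,2]`:
`(₀D_t^α w)(t) = (d²/dt²)[ ₀I_t^{2−α}(w(s) − w'(0)s − w(0)) ](t)` (second derivative of `w` when `α = 2`). -/
noncomputable def caputoD (α : ℝ) (w : ℝ → ℝ) : ℝ → ℝ :=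
  deriv (deriv (capKernel α w))

/-- `g ∈ AC²([0,T])`: `g` is differentiable on `[0,T]`, its second derivative is integrable,
and `g'` is the integral of `g''` (i.e. `g'` is absolutely continuous). -/
def AC2On (g : ℝ → ℝ) (T : ℝ) : Prop :=
  (∀ t ∈ Set.Icc (0:ℝ) T, DifferentiableAt ℝ g t) ∧
  IntervalIntegrable (deriv (deriv g)) volume 0 T ∧
  ∀ t ∈ Set.Icc (0:ℝ) T, deriv g t = deriv g 0 + ∫ s in (0:ℝ)..t, deriv (deriv g) s

/-! ### Rising factorial coefficients and discretised subordinator densities -/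

/-- The coefficient of `x ^ m` in `(1 - x) ^ (-s)`, that is `s (s + 1) ⋯ (s + m - 1) / m!`. -/
noncomputable def risingCoeff (m : ℕ) (s : ℝ) : ℝ :=
  (∏ j ∈ Finset.range m, (s + j)) / (m.factorial : ℝ)

lemma risingCoeff_zero (s : ℝ) : risingCoeff 0 s = 1 := by simp [risingCoeff]

lemma risingCoeff_succ (m : ℕ) (s : ℝ) :
    (m + 1 : ℝ) * risingCoeff (m + 1) s = (s + m) * risingCoeff m s := by
  have h : (m.factorial : ℝ) ≠ 0 := by positivity
  have h' : (m + 1 : ℝ) ≠ 0 := by positivity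
  simp only [risingCoeff, Finset.prod_range_succ, Nat.factorial_succ, Nat.cast_mul, Nat.cast_add,
    Nat.cast_one]
  field_simp

lemma risingCoeff_succ' (m : ℕ) (s : ℝ) :
    (m + 1 : ℝ) * risingCoeff (m + 1) s = s * risingCoeff m (s + 1) := by
  have h : (m.factorial : ℝ) ≠ 0 := by positivity
  have h' : (m + 1 : ℝ) ≠ 0 := by positivity
  have h2 : ∏ j ∈ Finset.range m, (s + ((j + 1 : ℕ) : ℝ)) = ∏ j ∈ Finset.range m, (s + 1 + j) := by
    refine Finset.prod_congr rfl fun j _ => ?_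
    push_cast; ring
  simp only [risingCoeff, Finset.prod_range_succ', Nat.factorial_succ, Nat.cast_mul]
  rw [h2]
  push_cast
  field_simp
  ring

lemma risingCoeff_nonneg (m : ℕ) {s : ℝ} (hs : 0 ≤ s) : 0 ≤ risingCoeff m s := by
  unfold risingCoeff; positivity

/-- The Chu–Vandermonde identity: `(1 - z) ^ (-x) (1 - z) ^ (-y) = (1 - z) ^ (-(x + y))`, compared
coefficientwise. -/
lemma risingCoeff_add (m : ℕ) (x y : ℝ) :
    ∑ ij ∈ Finset.HasAntidiagonal.antidiagonal m, risingCoeff ij.1 x * risingCoeff ij.2 y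
      = risingCoeff m (x + y) := by
  induction m with
  | zero => simp [risingCoeff_zero]
  | succ m ih =>
    have hm : (m + 1 : ℝ) ≠ 0 := by positivity
    have h1 : (m + 1 : ℝ) * ∑ ij ∈ Finset.HasAntidiagonal.antidiagonal (m + 1),
        risingCoeff ij.1 x * risingCoeff ij.2 y
        = (∑ ij ∈ Finset.HasAntidiagonal.antidiagonal (m + 1), (ij.1 : ℝ) * risingCoeff ij.1 x * risingCoeff ij.2 y)
        + ∑ ij ∈ Finset.HasAntidiagonal.antidiagonal (m + 1), risingCoeff ij.1 x * ((ij.2 : ℝ) * risingCoeff ij.2 y) := by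
      rw [Finset.mul_sum, ← Finset.sum_add_distrib]
      refine Finset.sum_congr rfl fun ij hij => ?_
      have : (ij.1 : ℝ) + ij.2 = m + 1 := by
        have := Finset.HasAntidiagonal.mem_antidiagonal.1 hij
        exact_mod_cast this
      rw [← this]; ring
    rw [Finset.Nat.sum_antidiagonal_succ (f := fun ij : ℕ × ℕ =>
      (ij.1 : ℝ) * risingCoeff ij.1 x * risingCoeff ij.2 y),
      Finset.Nat.sum_antidiagonal_succ' (f := fun ij : ℕ × ℕ =>
      risingCoeff ij.1 x * ((ij.2 : ℝ) * risingCoeff ij.2 y))] at h1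
    push_cast at h1
    simp only [risingCoeff_succ, zero_mul, mul_zero, zero_add] at h1
    rw [← Finset.sum_add_distrib] at h1
    apply mul_left_cancel₀ hm
    rw [risingCoeff_succ, ← ih, h1, Finset.mul_sum]
    refine Finset.sum_congr rfl fun ij hij => ?_
    have : (ij.1 : ℝ) + ij.2 = m := by
      have := Finset.HasAntidiagonal.mem_antidiagonal.1 hij
      exact_mod_cast this
    rw [← this]; ring

/-- Euler's product for `1 / Γ`, in the normalisation in which `risingCoeff m s` approximates
`m ^ (s - 1) / Γ(s)`. -/
lemma tendsto_risingCoeff {s : ℝ} (hs : 0 < s) :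
    Tendsto (fun m : ℕ => (m : ℝ) * (m : ℝ) ^ (-s) * risingCoeff m s) atTop
      (nhds (1 / Real.Gamma s)) := by
  have h1 := (Real.GammaSeq_tendsto_Gamma s).inv₀ (Real.Gamma_pos_of_pos hs).ne'
  have h2 : Tendsto (fun m : ℕ => (m : ℝ) / (m + s)) atTop (nhds 1) := by
    exact tendsto_natCast_div_add_atTop s
  have h3 := h2.mul h1
  rw [one_mul, ← one_div] at h3
  refine h3.congr' ?_
  filter_upwards [eventually_gt_atTop 0] with m hm
  have hm' : (0 : ℝ) < m := by exact_mod_cast hm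
  have hf : (m.factorial : ℝ) ≠ 0 := by positivity
  have hp : ∏ j ∈ Finset.range m, (s + j) ≠ 0 :=
    (Finset.prod_pos fun j _ => by positivity).ne'
  rw [Real.GammaSeq, risingCoeff, Finset.prod_range_succ, Real.rpow_neg hm'.le]
  have : (m:ℝ) ^ s ≠ 0 := by positivity
  have : s + m ≠ 0 := by positivity
  field_simp
  ring

/-- A bound uniform in `s`: the first `M + 1` factors of the product are bounded crudely, the others by
`1 + s / k ≤ (k / (k - 1)) ^ s`, which telescopes. -/
lemma risingCoeff_bound (M : ℕ) (hM : 1 ≤ M) (m : ℕ) (hm : M + 1 ≤ m) {s : ℝ} (hs : 0 < s) :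
    (m : ℝ) * risingCoeff m s ≤ s * (1 + s) ^ M * (((m : ℝ) - 1) / M) ^ s := by
  induction m, hm using Nat.le_induction with
  | base =>
    have hM' : (0 : ℝ) < M := by exact_mod_cast hM
    have key : ∀ n : ℕ, ((n + 1 : ℕ) : ℝ) * risingCoeff (n + 1) s ≤ s * (1 + s) ^ n := by
      intro n
      induction n with
      | zero =>
        have := risingCoeff_succ 0 s
        simp only [risingCoeff_zero] at this
        simp at this ⊢
        linarith
      | succ n ih =>
        have h := risingCoeff_succ (n + 1) s
        have h0 : 0 ≤ risingCoeff (n + 1) s := risingCoeff_nonneg _ hs.le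
        push_cast at h ih ⊢
        rw [h, pow_succ, ← mul_assoc]
        calc (s + (n + 1)) * risingCoeff (n + 1) s
            ≤ ((n + 1) * (1 + s)) * risingCoeff (n + 1) s := by
              gcongr
              nlinarith [Nat.cast_nonneg (α := ℝ) n]
          _ = ((n + 1) * risingCoeff (n + 1) s) * (1 + s) := by ring
          _ ≤ _ := by gcongr
    have := key M
    push_cast
    rw [add_sub_cancel_right, div_self hM'.ne', Real.one_rpow, mul_one]
    exact_mod_cast this
  | succ m hm ih =>
    have hM' : (0 : ℝ) < M := by exact_mod_cast hM
    have hm1 : (2 : ℝ) ≤ m := by exact_mod_cast (by omega : 2 ≤ m)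
    have h := risingCoeff_succ m s
    have h0 : 0 ≤ risingCoeff m s := risingCoeff_nonneg _ hs.le
    push_cast
    rw [h]
    have e1 : (1 + s / m) ≤ ((m : ℝ) / (m - 1)) ^ s := by
      have a1 : 1 + s / m ≤ Real.exp (s / m) := by
        have := Real.add_one_le_exp (s / m); linarith
      refine a1.trans ?_
      have a2 : Real.exp (1 / m) ≤ (m : ℝ) / (m - 1) := by
        have := Real.one_sub_le_exp_neg (1 / (m : ℝ))
        rw [Real.exp_neg] at this
        have h3 : (1 - 1 / (m : ℝ)) = ((m : ℝ) / (m - 1))⁻¹ := by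
          have : (m : ℝ) ≠ 0 := by linarith
          have : (m : ℝ) - 1 ≠ 0 := by linarith
          field_simp
        rw [h3] at this
        exact (inv_le_inv₀ (div_pos (by linarith) (by linarith)) (Real.exp_pos _)).1 this
      calc Real.exp (s / m) = (Real.exp (1 / m)) ^ s := by
            rw [← Real.exp_mul]; congr 1; ring
        _ ≤ _ := by gcongr
    calc (s + m) * risingCoeff m s = (1 + s / m) * (m * risingCoeff m s) := by
          field_simp; ring
      _ ≤ ((m : ℝ) / (m - 1)) ^ s * (s * (1 + s) ^ M * (((m : ℝ) - 1) / M) ^ s) := by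
          gcongr
          · exact Real.rpow_nonneg (div_nonneg (by linarith) (by linarith)) _
      _ = s * (1 + s) ^ M * (((m : ℝ) / (m - 1)) ^ s * (((m : ℝ) - 1) / M) ^ s) := by ring
      _ = _ := by
          rw [← Real.mul_rpow (div_nonneg (by linarith) (by linarith))
            (div_nonneg (by linarith) (by linarith))]
          congr 2
          have : (m : ℝ) - 1 ≠ 0 := by linarith
          field_simp
          ring

/-- Since `R` may be arbitrarily small, this says that the approximants of `1 / Γ(s)` decay faster than
any exponential in `s`, uniformly in `m`. It provides the dominating series in the limit `m → ∞`. -/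
lemma risingCoeff_le_geom {R : ℝ} (hR : 0 < R) :
    ∃ C > 0, ∃ m₀ : ℕ, 1 ≤ m₀ ∧ ∀ m ≥ m₀, ∀ s : ℝ, 0 < s →
      (m : ℝ) * (m : ℝ) ^ (-s) * risingCoeff m s ≤ C * R ^ s := by
  -- `M` is chosen so that `exp 1 / M ≤ R`; the factor `exp s` comes from `(1 + s) ^ (M + 1)`.
  obtain ⟨M, hM⟩ := exists_nat_ge (Real.exp 1 / R + 1)
  have hM1 : (1 : ℝ) ≤ M := by
    have : 0 < Real.exp 1 / R := by positivity
    linarith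
  have hM1' : 1 ≤ M := by exact_mod_cast hM1
  refine ⟨((M + 1).factorial : ℝ) * Real.exp 1, by positivity, M + 1, by omega, ?_⟩
  intro m hm s hs
  have hm0 : (1 : ℝ) < m := by exact_mod_cast (by omega : 1 < m)
  have h1 := risingCoeff_bound M hM1' m hm hs
  have h2 : (1 + s) ^ (M + 1) ≤ ((M + 1).factorial : ℝ) * Real.exp (1 + s) := by
    have := Real.pow_div_factorial_le_exp (1 + s) (by linarith) (M + 1)
    rwa [div_le_iff₀ (by positivity), mul_comm] at this
  have h3 : s * (1 + s) ^ M ≤ (1 + s) ^ (M + 1) := by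
    rw [pow_succ, mul_comm]; gcongr; linarith
  have h4 : Real.exp 1 / M ≤ R := by
    rw [div_le_iff₀ (by linarith), mul_comm, ← div_le_iff₀ hR]; linarith
  have h5 : (m : ℝ) ^ (-s) * (((m : ℝ) - 1) / M) ^ s ≤ (1 / (M : ℝ)) ^ s := by
    rw [Real.rpow_neg (by linarith), ← Real.inv_rpow (by linarith), ← Real.mul_rpow (by positivity)
      (div_nonneg (by linarith) (by linarith))]
    refine Real.rpow_le_rpow ?_ ?_ hs.le
    · exact mul_nonneg (by positivity) (div_nonneg (by linarith) (by linarith))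
    · rw [← div_eq_inv_mul, div_div, div_le_div_iff₀ (by positivity) (by positivity)]
      nlinarith
  calc (m : ℝ) * (m : ℝ) ^ (-s) * risingCoeff m s
      = (m : ℝ) ^ (-s) * ((m : ℝ) * risingCoeff m s) := by ring
    _ ≤ (m : ℝ) ^ (-s) * (s * (1 + s) ^ M * (((m : ℝ) - 1) / M) ^ s) := by gcongr
    _ = (s * (1 + s) ^ M) * ((m : ℝ) ^ (-s) * (((m : ℝ) - 1) / M) ^ s) := by ring
    _ ≤ (((M + 1).factorial : ℝ) * Real.exp (1 + s)) * (1 / (M : ℝ)) ^ s := by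
        refine mul_le_mul (h3.trans h2) h5 ?_ (by positivity)
        exact mul_nonneg (by positivity)
          (Real.rpow_nonneg (div_nonneg (by linarith) (by linarith)) _)
    _ = ((M + 1).factorial : ℝ) * Real.exp 1 * (Real.exp 1 / M) ^ s := by
        rw [Real.exp_add, div_eq_mul_one_div (Real.exp 1), Real.mul_rpow (by positivity)
          (by positivity), ← Real.exp_mul, one_mul]
        ring
    _ ≤ _ := by gcongr

lemma inv_Gamma_le_geom {R : ℝ} (hR : 0 < R) :
    ∃ C > 0, ∀ s : ℝ, 0 < s → 1 / Real.Gamma s ≤ C * R ^ s := by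
  obtain ⟨C, hC, m₀, -, h⟩ := risingCoeff_le_geom hR
  refine ⟨C, hC, fun s hs => ?_⟩
  exact le_of_tendsto (tendsto_risingCoeff hs)
    ((eventually_ge_atTop m₀).mono fun m hm => h m hm s hs)

/-- Nonnegative densities `q_m` with Mellin transform `Γ(κ) · risingCoeff m (μκ)`: namely, `q_m(τ)` is the
coefficient of `z ^ m` in `exp (-τ (1 - z) ^ μ)`. Suitably rescaled they approximate the density of the
inverse `μ`-stable subordinator. Differentiating in `z` gives the recursion
`(m + 1) q_{m+1}(τ) = μ τ ∑_{i+j=m} risingCoeff i (1 - μ) q_j(τ)`, whose coefficients are nonnegative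
because `μ < 1`; it is used as the definition. -/
lemma exists_subordinator {μ : ℝ} (hμ0 : 0 < μ) (hμ1 : μ < 1) (m : ℕ) :
    ∃ q : ℝ → ℝ, (∀ τ, 0 < τ → 0 ≤ q τ) ∧ ∀ κ : ℝ, 0 < κ →
      IntegrableOn (fun τ => q τ * τ ^ (κ - 1)) (Set.Ioi 0) ∧
      ∫ τ in Set.Ioi (0 : ℝ), q τ * τ ^ (κ - 1) = Real.Gamma κ * risingCoeff m (μ * κ) := by
  induction m using Nat.strong_induction_on with
  | _ m ih =>
  rcases m with _ | m
  · refine ⟨fun τ => Real.exp (-τ), fun τ _ => (Real.exp_pos _).le, fun κ hκ => ⟨?_, ?_⟩⟩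
    · exact Real.GammaIntegral_convergent hκ
    · rw [risingCoeff_zero, mul_one, Real.Gamma_eq_integral hκ]
  · have ih' : ∀ k : ℕ, ∃ q : ℝ → ℝ, k < m + 1 → (∀ τ, 0 < τ → 0 ≤ q τ) ∧ ∀ κ : ℝ, 0 < κ →
      IntegrableOn (fun τ => q τ * τ ^ (κ - 1)) (Set.Ioi 0) ∧
      ∫ τ in Set.Ioi (0 : ℝ), q τ * τ ^ (κ - 1) = Real.Gamma κ * risingCoeff k (μ * κ) := by
      intro k
      by_cases hk : k < m + 1
      · obtain ⟨q, hq⟩ := ih k hk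
        exact ⟨q, fun _ => hq⟩
      · exact ⟨0, fun h => absurd h hk⟩
    choose q hq using ih'
    have hlt : ∀ ij ∈ Finset.HasAntidiagonal.antidiagonal m, ij.2 < m + 1 := by
      intro ij hij
      have := Finset.HasAntidiagonal.mem_antidiagonal.1 hij
      omega
    have hEq : ∀ κ : ℝ, Set.EqOn (fun τ => (μ / (m + 1) * τ * ∑ ij ∈ Finset.HasAntidiagonal.antidiagonal m,
        risingCoeff ij.1 (1 - μ) * q ij.2 τ) * τ ^ (κ - 1))
        (fun τ => ∑ ij ∈ Finset.HasAntidiagonal.antidiagonal m,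
        (μ / (m + 1) * risingCoeff ij.1 (1 - μ)) * (q ij.2 τ * τ ^ (κ + 1 - 1)))
        (Set.Ioi 0) := by
      intro κ τ hτ
      have hτ' : (0 : ℝ) < τ := hτ
      have : τ ^ (κ + 1 - 1) = τ * τ ^ (κ - 1) := by
        rw [show κ + 1 - 1 = 1 + (κ - 1) by ring, Real.rpow_add hτ', Real.rpow_one]
      simp only [this]
      rw [Finset.mul_sum, Finset.sum_mul]
      refine Finset.sum_congr rfl fun ij _ => ?_
      ring
    refine ⟨fun τ => μ / (m + 1) * τ * ∑ ij ∈ Finset.HasAntidiagonal.antidiagonal m,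
        risingCoeff ij.1 (1 - μ) * q ij.2 τ, ?_, ?_⟩
    · intro τ hτ
      refine mul_nonneg (by positivity) (Finset.sum_nonneg fun ij hij => ?_)
      exact mul_nonneg (risingCoeff_nonneg _ (by linarith)) ((hq _ (hlt ij hij)).1 τ hτ)
    · intro κ hκ
      have hint : ∀ ij ∈ Finset.HasAntidiagonal.antidiagonal m, IntegrableOn (fun τ =>
          (μ / (m + 1) * risingCoeff ij.1 (1 - μ)) * (q ij.2 τ * τ ^ (κ + 1 - 1))) (Set.Ioi 0) :=
        fun ij hij => (((hq _ (hlt ij hij)).2 (κ + 1) (by linarith)).1).const_mul _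
      constructor
      · refine IntegrableOn.congr_fun ?_ (hEq κ).symm measurableSet_Ioi
        exact integrable_finsetSum _ hint
      · rw [setIntegral_congr_fun measurableSet_Ioi (hEq κ), integral_finsetSum _ hint]
        have hm : (m + 1 : ℝ) ≠ 0 := by positivity
        have e : ∀ ij ∈ Finset.HasAntidiagonal.antidiagonal m, ∫ τ in Set.Ioi (0 : ℝ),
          (μ / (m + 1) * risingCoeff ij.1 (1 - μ)) * (q ij.2 τ * τ ^ (κ + 1 - 1))
          = μ / (m + 1) * Real.Gamma (κ + 1) *
            (risingCoeff ij.1 (1 - μ) * risingCoeff ij.2 (μ * (κ + 1))) := by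
          intro ij hij
          rw [integral_const_mul, ((hq _ (hlt ij hij)).2 (κ + 1) (by linarith)).2]
          ring
        rw [Finset.sum_congr rfl e, ← Finset.mul_sum, risingCoeff_add, Real.Gamma_add_one hκ.ne']
        have := risingCoeff_succ' m (μ * κ)
        rw [show 1 - μ + μ * (κ + 1) = μ * κ + 1 by ring]
        apply mul_left_cancel₀ hm
        rw [mul_left_comm (m + 1 : ℝ) (Real.Gamma κ), this]
        field_simp

/-! ### Mittag-Leffler kernels -/

/-- The Mittag-Leffler kernel `t ^ (σ - 1) E_{ρ,σ}(-a t ^ ρ)`, written as the series of its powers.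
It is used for `a, ρ, σ, t > 0`, where the series converges absolutely (`hasSum_mittag`). -/
noncomputable def mittagKernel (a ρ σ t : ℝ) : ℝ :=
  ∑' j : ℕ, (-a) ^ j * (t ^ (σ + ρ * j - 1) / Real.Gamma (σ + ρ * j))

/-- The radius `R` is the one for which the terms form a geometric series of ratio `1 / 2`; it does not
depend on `σ`. -/
lemma exists_geom_summable {a ρ t : ℝ} (ha : 0 < a) (hρ : 0 < ρ) (ht : 0 < t) :
    ∃ R > 0, ∀ σ : ℝ, Summable fun j : ℕ => a ^ j * (t ^ (σ + ρ * j) * R ^ (σ + ρ * j)) := by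
  set x : ℝ := (1 / (2 * a)) ^ (1 / ρ) with hx
  have hx0 : 0 < x := by positivity
  have hxρ : x ^ ρ = 1 / (2 * a) := by
    rw [hx, ← Real.rpow_mul (by positivity), one_div_mul_cancel hρ.ne', Real.rpow_one]
  refine ⟨x / t, by positivity, fun σ => ?_⟩
  have : (fun j : ℕ => a ^ j * (t ^ (σ + ρ * j) * (x / t) ^ (σ + ρ * j)))
      = fun j : ℕ => x ^ σ * (1 / 2 : ℝ) ^ j := by
    funext j
    rw [← Real.mul_rpow ht.le (by positivity), mul_div_cancel₀ _ ht.ne', Real.rpow_add hx0,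
      Real.rpow_mul hx0.le, hxρ, Real.rpow_natCast, mul_left_comm, ← mul_pow]
    congr 2
    field_simp
  rw [this]
  exact (summable_geometric_of_lt_one (by norm_num) (by norm_num)).mul_left _

lemma summable_mittag_abs {a ρ σ t : ℝ} (ha : 0 < a) (hρ : 0 < ρ) (hσ : 0 < σ) (ht : 0 < t) :
    Summable fun j : ℕ => a ^ j * (t ^ (σ + ρ * j - 1) / Real.Gamma (σ + ρ * j)) := by
  obtain ⟨R, hR, h⟩ := exists_geom_summable ha hρ ht
  obtain ⟨C, hC, hΓ⟩ := inv_Gamma_le_geom hR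
  refine Summable.of_nonneg_of_le (fun j => ?_) (fun j => ?_) ((h σ).mul_left (C / t))
  · have : 0 < Real.Gamma (σ + ρ * j) := Real.Gamma_pos_of_pos (by positivity)
    positivity
  · have h1 := hΓ (σ + ρ * j) (by positivity)
    rw [Real.rpow_sub_one ht.ne']
    calc a ^ j * (t ^ (σ + ρ * j) / t / Real.Gamma (σ + ρ * j))
        = a ^ j * (t ^ (σ + ρ * j) / t) * (1 / Real.Gamma (σ + ρ * j)) := by ring
      _ ≤ a ^ j * (t ^ (σ + ρ * j) / t) * (C * R ^ (σ + ρ * j)) := by gcongr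
      _ = _ := by ring

lemma norm_mittag_term {a ρ σ t : ℝ} (ha : 0 < a) (hρ : 0 < ρ) (hσ : 0 < σ) (ht : 0 < t) (j : ℕ) :
    ‖(-a) ^ j * (t ^ (σ + ρ * j - 1) / Real.Gamma (σ + ρ * j))‖
      = a ^ j * (t ^ (σ + ρ * j - 1) / Real.Gamma (σ + ρ * j)) := by
  have : 0 < Real.Gamma (σ + ρ * j) := Real.Gamma_pos_of_pos (by positivity)
  rw [norm_mul, norm_pow, norm_neg, Real.norm_of_nonneg ha.le, Real.norm_of_nonneg (by positivity)]

lemma hasSum_mittag {a ρ σ t : ℝ} (ha : 0 < a) (hρ : 0 < ρ) (hσ : 0 < σ) (ht : 0 < t) :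
    HasSum (fun j : ℕ => (-a) ^ j * (t ^ (σ + ρ * j - 1) / Real.Gamma (σ + ρ * j)))
      (mittagKernel a ρ σ t) := by
  refine Summable.hasSum (Summable.of_norm ?_)
  simp_rw [norm_mittag_term ha hρ hσ ht]
  exact summable_mittag_abs ha hρ hσ ht

/-- Splitting off the first term of the series. -/
lemma mittag_rec {a ρ σ t : ℝ} (ha : 0 < a) (hρ : 0 < ρ) (hσ : 0 < σ) (ht : 0 < t) :
    a * mittagKernel a ρ (σ + ρ) t = t ^ (σ - 1) / Real.Gamma σ - mittagKernel a ρ σ t := by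
  have h1 := hasSum_mittag ha hρ hσ ht
  have h2 := (hasSum_mittag ha hρ (add_pos hσ hρ) ht).mul_left (-a)
  have h3 := (hasSum_nat_add_iff' 1).2 h1
  have e : (fun n : ℕ => (-a) ^ (n + 1) * (t ^ (σ + ρ * ((n + 1 : ℕ) : ℝ) - 1) /
      Real.Gamma (σ + ρ * ((n + 1 : ℕ) : ℝ))))
      = fun i : ℕ => -a * ((-a) ^ i * (t ^ (σ + ρ + ρ * i - 1) / Real.Gamma (σ + ρ + ρ * i))) := by
    funext j
    push_cast
    rw [show σ + ρ * (j + 1 : ℝ) = σ + ρ + ρ * j by ring]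
    ring
  rw [e] at h3
  have h4 := h3.unique h2
  simp at h4
  linarith

/-! ### Beta integrals and convolutions with the kernels -/

lemma beta_interval_integrable {x y t : ℝ} (hx : 0 < x) (hy : 0 < y) (ht : 0 < t) :
    IntervalIntegrable (fun s : ℝ => (t - s) ^ (x - 1) * s ^ (y - 1)) volume 0 t := by
  have h0 : IntervalIntegrable (fun s : ℝ => s ^ (y - 1) * (t - s) ^ (x - 1)) volume 0 (t / 2) := by
    refine IntervalIntegrable.mul_continuousOn
      (intervalIntegral.intervalIntegrable_rpow' (by linarith)) ?_
    rw [Set.uIcc_of_le (by linarith)]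
    refine ContinuousOn.rpow_const (by fun_prop) fun s hs => Or.inl ?_
    have := hs.2
    linarith
  have h1 : IntervalIntegrable (fun s : ℝ => (t - s) ^ (x - 1) * s ^ (y - 1)) volume (t / 2) t := by
    refine IntervalIntegrable.mul_continuousOn ?_ ?_
    · have := (intervalIntegral.intervalIntegrable_rpow' (a := 0) (b := t / 2)
        (r := x - 1) (by linarith)).comp_sub_left t
      rw [sub_zero, sub_half] at this
      exact this.symm
    rw [Set.uIcc_of_le (by linarith)]
    refine ContinuousOn.rpow_const (by fun_prop) fun s hs => Or.inl ?_
    have := hs.1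
    linarith
  refine IntervalIntegrable.trans ?_ h1
  simpa only [mul_comm] using h0

lemma beta_interval_integral {x y t : ℝ} (hx : 0 < x) (hy : 0 < y) (ht : 0 < t) :
    ∫ s in (0:ℝ)..t, (t - s) ^ (x - 1) * s ^ (y - 1)
      = Real.Gamma x * Real.Gamma y / Real.Gamma (x + y) * t ^ (x + y - 1) := by
  have h := Complex.betaIntegral_scaled (y : ℂ) (x : ℂ) ht
  rw [Complex.betaIntegral_eq_Gamma_mul_div _ _ (by simpa) (by simpa)] at h
  have h2 : ∫ s in (0:ℝ)..t, (s : ℂ) ^ ((y : ℂ) - 1) * ((t : ℂ) - s) ^ ((x : ℂ) - 1)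
      = ((∫ s in (0:ℝ)..t, (t - s) ^ (x - 1) * s ^ (y - 1) : ℝ) : ℂ) := by
    rw [← intervalIntegral.integral_ofReal]
    refine intervalIntegral.integral_congr fun s hs => ?_
    rw [Set.uIcc_of_le ht.le] at hs
    rw [Complex.ofReal_mul, Complex.ofReal_cpow (by linarith [hs.2]), Complex.ofReal_cpow hs.1]
    push_cast
    ring
  rw [h2] at h
  have h3 : ((t : ℂ) ^ ((y : ℂ) + x - 1) * (Complex.Gamma y * Complex.Gamma x / Complex.Gamma (y + x)))
      = ((Real.Gamma x * Real.Gamma y / Real.Gamma (x + y) * t ^ (x + y - 1) : ℝ) : ℂ) := by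
    rw [Complex.ofReal_mul, Complex.ofReal_cpow ht.le, ← Complex.ofReal_add, Complex.Gamma_ofReal,
      Complex.Gamma_ofReal, Complex.Gamma_ofReal]
    push_cast
    rw [add_comm (y : ℂ) x, add_comm y x]
    ring
  rw [h3] at h
  exact_mod_cast h

/-- The Riemann–Liouville integral shifts the order of a normalised power. -/
lemma rlInt_rpow {x θ t : ℝ} (hx : 0 < x) (hθ : 0 < θ) (ht : 0 < t) :
    rlInt x (fun s => s ^ (θ - 1) / Real.Gamma θ) t = t ^ (x + θ - 1) / Real.Gamma (x + θ) := by
  have h1 := (Real.Gamma_pos_of_pos hx).ne'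
  have h2 := (Real.Gamma_pos_of_pos hθ).ne'
  have h3 := (Real.Gamma_pos_of_pos (add_pos hx hθ)).ne'
  unfold rlInt
  have : ∀ s : ℝ, (t - s) ^ (x - 1) * (s ^ (θ - 1) / Real.Gamma θ)
      = (1 / Real.Gamma θ) * ((t - s) ^ (x - 1) * s ^ (θ - 1)) := fun s => by ring
  simp_rw [this]
  rw [intervalIntegral.integral_const_mul, beta_interval_integral hx hθ ht]
  field_simp

/-- Convolution with a Mittag-Leffler kernel is the series `∑ (-a)^j I^{σ + ρ j}`. The condition `1 ≤ σ`
makes the kernel bounded on `(0, t)`, so any integrable `f` is allowed. -/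
lemma hasSum_mittag_conv {a ρ σ t : ℝ} (ha : 0 < a) (hρ : 0 < ρ) (hσ : 1 ≤ σ) (ht : 0 < t)
    {f : ℝ → ℝ} (hf : IntervalIntegrable f volume 0 t) :
    HasSum (fun j : ℕ => (-a) ^ j * rlInt (σ + ρ * j) f t)
      (∫ s in (0:ℝ)..t, mittagKernel a ρ σ (t - s) * f s)
    ∧ IntervalIntegrable (fun s => mittagKernel a ρ σ (t - s) * f s) volume 0 t := by
  have hσ0 : 0 < σ := by linarith
  rw [intervalIntegrable_iff_integrableOn_Ioo_of_le ht.le] at hf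
  set F : ℕ → ℝ → ℝ := fun j s =>
    (-a) ^ j * ((t - s) ^ (σ + ρ * j - 1) / Real.Gamma (σ + ρ * j)) * f s with hF
  have hΓ : ∀ j : ℕ, 0 < Real.Gamma (σ + ρ * j) := fun j => Real.Gamma_pos_of_pos (by positivity)
  have hbd : ∀ j : ℕ, ∀ s ∈ Set.Ioo 0 t,
      ‖(-a) ^ j * ((t - s) ^ (σ + ρ * j - 1) / Real.Gamma (σ + ρ * j))‖
        ≤ a ^ j * (t ^ (σ + ρ * j - 1) / Real.Gamma (σ + ρ * j)) := by
    intro j s hs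
    rw [norm_mittag_term ha hρ hσ0 (by linarith [hs.2])]
    have := hΓ j
    have h0 : 0 ≤ ρ * j := by positivity
    gcongr
    · linarith [hs.2]
    · linarith
    · linarith [hs.1]
  have hFint : ∀ j, IntegrableOn (F j) (Set.Ioo 0 t) := by
    intro j
    refine Integrable.bdd_mul (c := a ^ j * (t ^ (σ + ρ * j - 1) / Real.Gamma (σ + ρ * j)))
      hf ?_ ?_
    · exact Measurable.aestronglyMeasurable (by fun_prop)
    · exact (ae_restrict_iff' measurableSet_Ioo).2 (Eventually.of_forall (hbd j))
  have hnorm : ∀ j, ∫ s in Set.Ioo 0 t, ‖F j s‖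
      ≤ a ^ j * (t ^ (σ + ρ * j - 1) / Real.Gamma (σ + ρ * j)) * ∫ s in Set.Ioo 0 t, ‖f s‖ := by
    intro j
    rw [← integral_const_mul]
    refine setIntegral_mono_on (hFint j).norm (hf.norm.const_mul _) measurableSet_Ioo fun s hs => ?_
    rw [hF, norm_mul]
    gcongr
    exact hbd j s hs
  have hsum : Summable fun j => ∫ s in Set.Ioo 0 t, ‖F j s‖ :=
    Summable.of_nonneg_of_le (fun j => integral_nonneg fun s => norm_nonneg _) hnorm
      ((summable_mittag_abs ha hρ hσ0 ht).mul_right _)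
  have hval : ∀ s ∈ Set.Ioo 0 t, ∑' j, F j s = mittagKernel a ρ σ (t - s) * f s := by
    intro s hs
    exact ((hasSum_mittag ha hρ hσ0 (by linarith [hs.2] : 0 < t - s)).mul_right (f s)).tsum_eq
  have hmain := hasSum_integral_of_summable_integral_norm hFint hsum
  constructor
  · rw [intervalIntegral.integral_of_le ht.le, integral_Ioc_eq_integral_Ioo,
      ← setIntegral_congr_fun measurableSet_Ioo hval]
    have e : (fun j : ℕ => (-a) ^ j * rlInt (σ + ρ * j) f t)
        = fun j => ∫ s in Set.Ioo 0 t, F j s := by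
      funext j
      rw [rlInt, intervalIntegral.integral_of_le ht.le, integral_Ioc_eq_integral_Ioo,
        ← integral_const_mul, ← integral_const_mul]
      refine integral_congr_ae (Eventually.of_forall fun s => ?_)
      simp only [hF]
      ring
    rw [e]
    exact hmain
  · rw [intervalIntegrable_iff_integrableOn_Ioo_of_le ht.le]
    set S := ∑' j : ℕ, a ^ j * (t ^ (σ + ρ * j - 1) / Real.Gamma (σ + ρ * j)) with hS
    refine Integrable.bdd_mul (c := S) hf ?_ ?_
    · have : AEStronglyMeasurable (fun s => ∑' j : ℕ, (-a) ^ j * ((t - s) ^ (σ + ρ * j - 1) /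
          Real.Gamma (σ + ρ * j))) (volume.restrict (Set.Ioo 0 t)) := by
        refine aestronglyMeasurable_of_tendsto_ae atTop
          (f := fun N s => ∑ j ∈ Finset.range N, (-a) ^ j * ((t - s) ^ (σ + ρ * j - 1) /
          Real.Gamma (σ + ρ * j))) (fun N => ?_) ?_
        · exact Measurable.aestronglyMeasurable (by fun_prop)
        · refine (ae_restrict_iff' measurableSet_Ioo).2 (Eventually.of_forall fun s hs => ?_)
          exact (hasSum_mittag ha hρ hσ0 (by linarith [hs.2] : 0 < t - s)).tendsto_sum_nat
      exact this
    · refine (ae_restrict_iff' measurableSet_Ioo).2 (Eventually.of_forall fun s hs => ?_)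
      exact tsum_of_norm_bounded (summable_mittag_abs ha hρ hσ0 ht).hasSum fun j => hbd j s hs

/-- Fractional integration of order `θ` raises the second index of the kernel by `θ`. -/
lemma mittag_conv_rpow {a ρ σ θ t : ℝ} (ha : 0 < a) (hρ : 0 < ρ) (hσ : 1 ≤ σ) (hθ : 0 < θ)
    (ht : 0 < t) :
    ∫ s in (0:ℝ)..t, mittagKernel a ρ σ (t - s) * (s ^ (θ - 1) / Real.Gamma θ)
      = mittagKernel a ρ (σ + θ) t := by
  have hf : IntervalIntegrable (fun s : ℝ => s ^ (θ - 1) / Real.Gamma θ) volume 0 t :=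
    (intervalIntegral.intervalIntegrable_rpow' (by linarith)).div_const _
  refine (hasSum_mittag_conv ha hρ hσ ht hf).1.unique ?_
  convert hasSum_mittag ha hρ (by linarith : 0 < σ + θ) ht using 2 with j
  rw [rlInt_rpow (by positivity) hθ ht]
  rw [show σ + ρ * j + θ = σ + θ + ρ * j by ring]

/-! ### Subordination -/

/-- The moments of the density rescaled by `c = (t / m) ^ μ`; as `m → ∞` the right-hand side tends to
`t ^ (μκ) / Γ(μκ)`. -/
lemma subordinator_moment {μ t κ : ℝ} {q : ℝ → ℝ} {m : ℕ} (ht : 0 < t) (hm : 1 ≤ m)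
    (hκ : 0 < κ) (hq : IntegrableOn (fun τ => q τ * τ ^ (κ - 1)) (Set.Ioi 0) ∧
      ∫ τ in Set.Ioi (0 : ℝ), q τ * τ ^ (κ - 1) = Real.Gamma κ * risingCoeff m (μ * κ)) :
    IntegrableOn (fun τ => (m * (t / m) ^ μ) * q τ *
        ((((t / m) ^ μ) * τ) ^ (κ - 1) / Real.Gamma κ)) (Set.Ioi 0) ∧
      ∫ τ in Set.Ioi (0 : ℝ), (m * (t / m) ^ μ) * q τ *
        ((((t / m) ^ μ) * τ) ^ (κ - 1) / Real.Gamma κ)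
        = t ^ (μ * κ) * ((m : ℝ) * (m : ℝ) ^ (-(μ * κ)) * risingCoeff m (μ * κ)) := by
  have hm0 : (0 : ℝ) < m := by exact_mod_cast hm
  have hΓ := (Real.Gamma_pos_of_pos hκ).ne'
  set c : ℝ := (t / m) ^ μ with hc
  have hc0 : 0 < c := by positivity
  have hck : c * c ^ (κ - 1) = t ^ (μ * κ) * (m : ℝ) ^ (-(μ * κ)) := by
    rw [mul_comm, ← Real.rpow_add_one hc0.ne', sub_add_cancel, hc, ← Real.rpow_mul (by positivity),
      Real.div_rpow ht.le hm0.le, Real.rpow_neg hm0.le, div_eq_mul_inv]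
  have hEq : Set.EqOn (fun τ => (m * c) * q τ * ((c * τ) ^ (κ - 1) / Real.Gamma κ))
      (fun τ => (m * (c * c ^ (κ - 1)) / Real.Gamma κ) * (q τ * τ ^ (κ - 1))) (Set.Ioi 0) := by
    intro τ hτ
    have hτ' : (0 : ℝ) < τ := hτ
    simp only
    rw [Real.mul_rpow hc0.le hτ'.le]
    ring
  constructor
  · refine IntegrableOn.congr_fun ?_ hEq.symm measurableSet_Ioi
    exact hq.1.const_mul _
  · rw [setIntegral_congr_fun measurableSet_Ioi hEq, integral_const_mul, hq.2, hck]
    field_simp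

/-- Subordination transfers an inequality from order `2` to order `2μ`. Integrating against the inverse
stable subordinator maps `τ ^ (κ - 1) / Γ(κ)` to `t ^ (μκ - 1) / Γ(μκ)`, hence the kernel of order `2`
and index `κ` to the one of order `2μ` and index `μκ`. The inequality is integrated against the
approximating densities `q_m ≥ 0`, and then `m → ∞`. All quantities in the proof carry an additional
factor `t`, removed at the end. -/
lemma subordination {μ a κ η C e t : ℝ} (hμ0 : 0 < μ) (hμ1 : μ < 1) (ha : 0 < a) (hκ : 0 < κ)
    (hη : 0 < η) (ht : 0 < t)
    (h : ∀ τ : ℝ, 0 < τ → 0 ≤ C * τ ^ (η - 1) + e * mittagKernel a 2 κ τ) :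
    0 ≤ C * Real.Gamma η / Real.Gamma (μ * η) * t ^ (μ * η - 1)
      + e * mittagKernel a (2 * μ) (μ * κ) t := by
  obtain ⟨R, hR, hgeom⟩ := exists_geom_summable (ρ := 2 * μ) ha (by positivity) ht
  obtain ⟨B, hB, m₀, hm₀, hbound⟩ := risingCoeff_le_geom hR
  set D : ℕ → ℝ → ℝ := fun m s => (m : ℝ) * (m : ℝ) ^ (-s) * risingCoeff m s with hD
  have hD0 : ∀ m s, 0 < s → 0 ≤ D m s := fun m s hs =>
    mul_nonneg (by positivity) (risingCoeff_nonneg _ hs.le)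
  set σ : ℕ → ℝ := fun j => μ * κ + 2 * μ * j with hσ
  have hσ0 : ∀ j, 0 < σ j := fun j => by simp only [hσ]; positivity
  have hκσ : ∀ j : ℕ, μ * (κ + 2 * j) = σ j := fun j => by simp only [hσ]; ring
  have hdom : ∀ m ≥ m₀, ∀ j : ℕ, a ^ j * (t ^ σ j * D m (σ j))
      ≤ B * (a ^ j * (t ^ σ j * R ^ σ j)) := by
    intro m hm j
    have := hbound m hm (σ j) (hσ0 j)
    calc a ^ j * (t ^ σ j * D m (σ j)) ≤ a ^ j * (t ^ σ j * (B * R ^ σ j)) := by gcongr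
      _ = _ := by ring
  have step : ∀ m ≥ m₀, 0 ≤ C * Real.Gamma η * (t ^ (μ * η) * D m (μ * η))
      + e * ∑' j : ℕ, (-a) ^ j * (t ^ σ j * D m (σ j)) := by
    intro m hm
    have hm1 : 1 ≤ m := hm₀.trans hm
    have hm0 : (0 : ℝ) < m := by exact_mod_cast hm1
    obtain ⟨q, hq0, hq⟩ := exists_subordinator hμ0 hμ1 m
    set c : ℝ := (t / m) ^ μ with hc
    have hc0 : 0 < c := by positivity
    have hη' := subordinator_moment (μ := μ) ht hm1 hη (hq η hη)
    have hj' : ∀ j : ℕ, _ := fun j => subordinator_moment (μ := μ) (κ := κ + 2 * j) ht hm1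
      (by positivity) (hq (κ + 2 * j) (by positivity))
    simp only [hκσ] at hj'
    set G : ℕ → ℝ → ℝ := fun j τ => (-a) ^ j *
      ((m * c) * q τ * ((c * τ) ^ (κ + 2 * j - 1) / Real.Gamma (κ + 2 * j))) with hG
    have hGint : ∀ j, Integrable (G j) (volume.restrict (Set.Ioi 0)) :=
      fun j => ((hj' j).1).const_mul _
    have hGval : ∀ j, ∫ τ in Set.Ioi (0:ℝ), G j τ = (-a) ^ j * (t ^ σ j * D m (σ j)) := by
      intro j
      rw [hG, integral_const_mul, (hj' j).2]
    have hGnorm : ∀ j, ∫ τ in Set.Ioi (0:ℝ), ‖G j τ‖ = a ^ j * (t ^ σ j * D m (σ j)) := by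
      intro j
      rw [← (hj' j).2, ← integral_const_mul]
      refine setIntegral_congr_fun measurableSet_Ioi fun τ hτ => ?_
      have hτ' : (0 : ℝ) < τ := hτ
      have h1 := hq0 τ hτ'
      have h2 : 0 < Real.Gamma (κ + 2 * j) := Real.Gamma_pos_of_pos (by positivity)
      simp only [hG]
      rw [norm_mul, norm_pow, norm_neg, Real.norm_of_nonneg ha.le,
        Real.norm_of_nonneg (by positivity)]
    have hsum : Summable fun j => ∫ τ in Set.Ioi (0:ℝ), ‖G j τ‖ := by
      simp_rw [hGnorm]
      refine Summable.of_nonneg_of_le (fun j => ?_) (hdom m hm) ((hgeom (μ * κ)).mul_left B)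
      have := hD0 m (σ j) (hσ0 j)
      positivity
    -- The power term is prepended to the series, so that one termwise integration suffices.
    set P : ℝ → ℝ := fun τ => C * Real.Gamma η *
      ((m * c) * q τ * ((c * τ) ^ (η - 1) / Real.Gamma η)) with hP
    set G' : ℕ → ℝ → ℝ := fun n => Nat.casesOn n P (fun j τ => e * G j τ) with hG'
    have hG'int : ∀ n, Integrable (G' n) (volume.restrict (Set.Ioi 0)) := by
      rintro (_ | j)
      · exact hη'.1.const_mul _
      · exact (hGint j).const_mul e
    have hG'sum : Summable fun n => ∫ τ in Set.Ioi (0:ℝ), ‖G' n τ‖ := by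
      rw [← summable_nat_add_iff 1]
      have hshift : (fun j => ∫ τ in Set.Ioi (0:ℝ), ‖G' (j + 1) τ‖)
          = fun j => ‖e‖ * ∫ τ in Set.Ioi (0:ℝ), ‖G j τ‖ := by
        funext j
        rw [← integral_const_mul]
        simp only [hG', norm_mul]
      rw [hshift]
      exact hsum.mul_left ‖e‖
    have hs := hasSum_integral_of_summable_integral_norm hG'int hG'sum
    have hpos : 0 ≤ ∫ τ in Set.Ioi (0:ℝ), ∑' n, G' n τ := by
      refine setIntegral_nonneg measurableSet_Ioi fun τ hτ => ?_
      have hτ' : (0 : ℝ) < τ := hτ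
      have hcτ : 0 < c * τ := by positivity
      have h1 := (hasSum_mittag ha (by norm_num : (0 : ℝ) < 2) hκ hcτ).mul_left (e * (m * c * q τ))
      have h2 : HasSum (fun n => G' n τ)
          (P τ + e * (m * c * q τ) * mittagKernel a 2 κ (c * τ)) := by
        refine (hasSum_nat_add_iff' 1).1 ?_
        have e1 : (fun j => G' (j + 1) τ) = fun i : ℕ => e * (m * c * q τ) *
            ((-a) ^ i * ((c * τ) ^ (κ + 2 * i - 1) / Real.Gamma (κ + 2 * i))) := by
          funext j
          simp only [hG', hG]
          ring
        have e2 : P τ + e * (m * c * q τ) * mittagKernel a 2 κ (c * τ)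
            - ∑ i ∈ Finset.range 1, G' i τ = e * (m * c * q τ) * mittagKernel a 2 κ (c * τ) := by
          rw [Finset.sum_range_one]
          exact add_sub_cancel_left _ _
        rw [e1, e2]
        exact h1
      rw [h2.tsum_eq]
      have h3 : P τ + e * (m * c * q τ) * mittagKernel a 2 κ (c * τ)
          = (m * c * q τ) * (C * (c * τ) ^ (η - 1) + e * mittagKernel a 2 κ (c * τ)) := by
        have := (Real.Gamma_pos_of_pos hη).ne'
        simp only [hP]
        field_simp
      rw [h3]
      exact mul_nonneg (mul_nonneg (by positivity) (hq0 τ hτ')) (h _ hcτ)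
    have hval : ∫ τ in Set.Ioi (0:ℝ), ∑' n, G' n τ
        = C * Real.Gamma η * (t ^ (μ * η) * D m (μ * η))
          + e * ∑' j : ℕ, (-a) ^ j * (t ^ σ j * D m (σ j)) := by
      rw [← hs.tsum_eq, hs.summable.tsum_eq_zero_add]
      congr 1
      · rw [← hη'.2, ← integral_const_mul]
        rfl
      · rw [← tsum_mul_left]
        refine tsum_congr fun j => ?_
        rw [← hGval, ← integral_const_mul]
    rw [← hval]
    exact hpos
  have hlim : Tendsto (fun m : ℕ => C * Real.Gamma η * (t ^ (μ * η) * D m (μ * η))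
      + e * ∑' j : ℕ, (-a) ^ j * (t ^ σ j * D m (σ j))) atTop
      (nhds (C * Real.Gamma η * (t ^ (μ * η) * (1 / Real.Gamma (μ * η)))
      + e * ∑' j : ℕ, (-a) ^ j * (t ^ σ j * (1 / Real.Gamma (σ j))))) := by
    refine Tendsto.add (((tendsto_risingCoeff (by positivity)).const_mul _).const_mul _)
      (Tendsto.const_mul _ ?_)
    refine tendsto_tsum_of_dominated_convergence ((hgeom (μ * κ)).mul_left B)
      (fun j => ((tendsto_risingCoeff (hσ0 j)).const_mul _).const_mul _) ?_
    filter_upwards [eventually_ge_atTop m₀] with m hm j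
    rw [norm_mul, norm_pow, norm_neg, Real.norm_of_nonneg ha.le, Real.norm_of_nonneg
      (mul_nonneg (by positivity) (hD0 m _ (hσ0 j)))]
    exact hdom m hm j
  have hfin := ge_of_tendsto hlim ((eventually_ge_atTop m₀).mono step)
  have e1 : ∑' j : ℕ, (-a) ^ j * (t ^ σ j * (1 / Real.Gamma (σ j)))
      = t * mittagKernel a (2 * μ) (μ * κ) t := by
    rw [mittagKernel, ← tsum_mul_left]
    refine tsum_congr fun j => ?_
    rw [Real.rpow_sub_one ht.ne']
    simp only [hσ]
    field_simp
  rw [e1] at hfin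
  refine nonneg_of_mul_nonneg_right (a := t) ?_ ht
  rw [Real.rpow_sub_one ht.ne']
  convert hfin using 1
  field_simp

/-! ### Positivity and growth of the kernels -/

lemma mittag_two_one {a : ℝ} (ha : 0 < a) (τ : ℝ) : mittagKernel a 2 1 τ = Real.cos (√a * τ) := by
  rw [mittagKernel, ← (Real.hasSum_cos (√a * τ)).tsum_eq]
  refine tsum_congr fun j => ?_
  rw [show (1 : ℝ) + 2 * j - 1 = ((2 * j : ℕ) : ℝ) by push_cast; ring, Real.rpow_natCast,
    show (1 : ℝ) + 2 * j = ((2 * j : ℕ) : ℝ) + 1 by push_cast; ring, Real.Gamma_nat_eq_factorial,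
    mul_pow, pow_mul (√a), Real.sq_sqrt ha.le, neg_pow a]
  ring

lemma mittag_two_two {a : ℝ} (ha : 0 < a) (τ : ℝ) :
    mittagKernel a 2 2 τ = Real.sin (√a * τ) / √a := by
  have hs : √a ≠ 0 := (Real.sqrt_pos.2 ha).ne'
  rw [mittagKernel, ← (Real.hasSum_sin (√a * τ)).tsum_eq, ← tsum_div_const]
  refine tsum_congr fun j => ?_
  rw [show (2 : ℝ) + 2 * j - 1 = ((2 * j + 1 : ℕ) : ℝ) by push_cast; ring, Real.rpow_natCast,
    show (2 : ℝ) + 2 * j = ((2 * j + 1 : ℕ) : ℝ) + 1 by push_cast; ring, Real.Gamma_nat_eq_factorial,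
    mul_pow, pow_succ (√a), pow_mul (√a), Real.sq_sqrt ha.le, neg_pow a]
  field_simp

lemma mittag_two_three {a : ℝ} (ha : 0 < a) {τ : ℝ} (hτ : 0 ≤ τ) :
    mittagKernel a 2 3 τ = (1 - Real.cos (√a * τ)) / a := by
  rcases hτ.eq_or_lt with rfl | hτ
  · have : ∀ j : ℕ, (0 : ℝ) ^ ((3 : ℝ) + 2 * j - 1) = 0 := fun j =>
      Real.zero_rpow (by have : (0 : ℝ) ≤ j := j.cast_nonneg
                         linarith)
    simp [mittagKernel, this]
  · have h := mittag_rec ha (by norm_num : (0 : ℝ) < 2) one_pos hτ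
    rw [mittag_two_one ha, show (1 : ℝ) + 2 = 3 by norm_num] at h
    rw [eq_div_iff ha.ne', mul_comm, h]
    simp

lemma abs_mittag_two_three_le {a : ℝ} (ha : 0 < a) {τ : ℝ} (hτ : 0 ≤ τ) :
    |mittagKernel a 2 3 τ| ≤ 2 / a := by
  rw [mittag_two_three ha hτ, abs_div, abs_of_pos ha]
  gcongr
  rw [abs_le]
  constructor <;> linarith [Real.neg_one_le_cos (√a * τ), Real.cos_le_one (√a * τ)]

/-- The kernel of index `3` is `(1 - cos (√a τ)) / a ≥ 0`, and those of larger index are its fractional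
integrals. -/
lemma mittag_two_nonneg {a κ τ : ℝ} (ha : 0 < a) (hκ : 3 ≤ κ) (hτ : 0 < τ) :
    0 ≤ mittagKernel a 2 κ τ := by
  have h3 : ∀ s : ℝ, 0 ≤ s → 0 ≤ mittagKernel a 2 3 s := fun s hs => by
    rw [mittag_two_three ha hs]
    exact div_nonneg (by linarith [Real.cos_le_one (√a * s)]) ha.le
  rcases hκ.eq_or_lt with rfl | hκ
  · exact h3 τ hτ.le
  · have hθ : 0 < κ - 3 := by linarith
    have h := mittag_conv_rpow ha (by norm_num : (0 : ℝ) < 2) (by norm_num : (1 : ℝ) ≤ 3) hθ hτ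
    rw [show 3 + (κ - 3) = κ by ring] at h
    rw [← h]
    refine intervalIntegral.integral_nonneg hτ.le fun s hs => ?_
    have h1 := Real.Gamma_pos_of_pos hθ
    have h2 := h3 (τ - s) (by linarith [hs.2])
    have h0 := hs.1
    positivity

/-- A fractional integral of order `θ ≤ 1` of a bounded function with bounded primitive stays bounded:
near the singularity `s ^ (θ - 1)` is integrable, and for `s ≥ 1` it is monotone, so an integration by
parts uses the primitive. -/
lemma conv_rpow_bound {θ M τ : ℝ} (hθ0 : 0 < θ) (hθ1 : θ ≤ 1) (hτ : 0 < τ) {F f : ℝ → ℝ}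
    (hF : ∀ x, HasDerivAt F (f x) x) (hf : Continuous f) (hFM : ∀ x, |F x| ≤ M)
    (hfM : ∀ x, |f x| ≤ M) :
    |∫ s in (0:ℝ)..τ, f (τ - s) * s ^ (θ - 1)| ≤ M / θ + 2 * M := by
  have hM : 0 ≤ M := (abs_nonneg _).trans (hfM 0)
  have hint : ∀ x y : ℝ, IntervalIntegrable (fun s : ℝ => f (τ - s) * s ^ (θ - 1)) volume x y := by
    intro x y
    refine IntervalIntegrable.continuousOn_mul
      (intervalIntegral.intervalIntegrable_rpow' (by linarith)) ?_
    exact (hf.comp (by fun_prop)).continuousOn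
  have small : ∀ x : ℝ, 0 ≤ x → x ≤ 1 →
      |∫ s in (0:ℝ)..x, f (τ - s) * s ^ (θ - 1)| ≤ M / θ := by
    intro x hx0 hx1
    have h1 : ‖∫ s in (0:ℝ)..x, f (τ - s) * s ^ (θ - 1)‖ ≤ ∫ s in (0:ℝ)..x, M * s ^ (θ - 1) := by
      refine intervalIntegral.norm_integral_le_of_norm_le hx0 ?_
        ((intervalIntegral.intervalIntegrable_rpow' (by linarith)).const_mul _)
      refine ae_of_all _ fun s hs => ?_
      have hs0 := hs.1
      rw [norm_mul, Real.norm_eq_abs, Real.norm_of_nonneg (by positivity)]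
      have := hfM (τ - s)
      gcongr
    rw [intervalIntegral.integral_const_mul, integral_rpow (Or.inl (by linarith)),
      sub_add_cancel, Real.zero_rpow hθ0.ne', sub_zero] at h1
    refine h1.trans ?_
    rw [mul_div_assoc']
    gcongr
    exact mul_le_of_le_one_right hM (Real.rpow_le_one hx0 hx1 hθ0.le)
  rcases le_total τ 1 with h | h
  · linarith [small τ hτ.le h]
  rw [← intervalIntegral.integral_add_adjacent_intervals (hint 0 1) (hint 1 τ)]
  refine (abs_add_le _ _).trans (add_le_add (small 1 zero_le_one le_rfl) ?_)
  have hu : ∀ x ∈ Set.uIcc 1 τ, HasDerivAt (fun s : ℝ => s ^ (θ - 1)) ((θ - 1) * x ^ (θ - 1 - 1)) x := by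
    intro x hx
    rw [Set.uIcc_of_le h] at hx
    exact Real.hasDerivAt_rpow_const (Or.inl (by linarith [hx.1]))
  have hv : ∀ x ∈ Set.uIcc 1 τ, HasDerivAt (fun s : ℝ => -F (τ - s)) (f (τ - x)) x := by
    intro x _
    simpa using ((hF (τ - x)).comp_const_sub τ x).fun_neg
  have hui : IntervalIntegrable (fun x : ℝ => (θ - 1) * x ^ (θ - 1 - 1)) volume 1 τ := by
    refine (intervalIntegral.intervalIntegrable_rpow (Or.inr ?_)).const_mul _
    rw [Set.uIcc_of_le h]
    exact fun h0 => by linarith [h0.1]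
  have hvi : IntervalIntegrable (fun x : ℝ => f (τ - x)) volume 1 τ :=
    (hf.comp (by fun_prop)).intervalIntegrable _ _
  have hparts := intervalIntegral.integral_mul_deriv_eq_deriv_mul hu hv hui hvi
  have hfun : ∀ s : ℝ, f (τ - s) * s ^ (θ - 1) = s ^ (θ - 1) * f (τ - s) := fun s => mul_comm _ _
  simp_rw [hfun]
  rw [hparts]
  have hrem : ‖∫ x in (1:ℝ)..τ, (θ - 1) * x ^ (θ - 1 - 1) * -F (τ - x)‖
      ≤ ∫ x in (1:ℝ)..τ, -M * ((θ - 1) * x ^ (θ - 1 - 1)) := by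
    refine intervalIntegral.norm_integral_le_of_norm_le h ?_ (hui.const_mul _)
    refine ae_of_all _ fun s hs => ?_
    have hs0 : 0 < s := by linarith [hs.1]
    rw [norm_mul, norm_neg, Real.norm_eq_abs, Real.norm_eq_abs, abs_mul,
      abs_of_nonpos (by linarith : θ - 1 ≤ 0), abs_of_pos (by positivity : 0 < s ^ (θ - 1 - 1))]
    have h1 := hFM (τ - s)
    have h2 : 0 ≤ -(θ - 1) * s ^ (θ - 1 - 1) := mul_nonneg (by linarith) (by positivity)
    nlinarith
  rw [intervalIntegral.integral_const_mul, intervalIntegral.integral_eq_sub_of_hasDerivAt hu hui,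
    Real.one_rpow] at hrem
  have hp : 0 < τ ^ (θ - 1) := by positivity
  have b1 : |τ ^ (θ - 1) * -F (τ - τ)| ≤ τ ^ (θ - 1) * M := by
    rw [abs_mul, abs_of_pos hp, abs_neg]
    gcongr
    exact hFM _
  have b2 := hFM (τ - 1)
  rw [Real.one_rpow]
  rw [Real.norm_eq_abs] at hrem
  rw [abs_le] at *
  constructor <;> linarith [b1.1, b1.2, b2.1, b2.2, hrem.1, hrem.2]

/-- For `κ ≤ 3` the kernel is a fractional integral of order at most `1` of `cos (√a τ)` or
`sin (√a τ) / √a`, hence bounded; for `κ > 3` it is a fractional integral of order `κ - 3` of a bounded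
function, hence grows at most like `τ ^ (κ - 3)`. -/
lemma mittag_two_bound {a κ : ℝ} (ha : 0 < a) (hκ : 1 < κ) :
    ∃ C, ∀ τ : ℝ, 0 < τ → |mittagKernel a 2 κ τ| ≤ C * τ ^ (max 1 (κ - 2) - 1) := by
  have hs : 0 < √a := Real.sqrt_pos.2 ha
  rcases le_or_gt κ 3 with h3 | h3
  · have hmax : max 1 (κ - 2) - 1 = 0 := by rw [max_eq_left (by linarith), sub_self]
    simp_rw [hmax, Real.rpow_zero, mul_one]
    have key : ∀ σ θ M : ℝ, 1 ≤ σ → 0 < θ → θ ≤ 1 → ∀ F f : ℝ → ℝ, (∀ x, HasDerivAt F (f x) x) →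
        Continuous f → (∀ x, |F x| ≤ M) → (∀ x, |f x| ≤ M) → (∀ x, mittagKernel a 2 σ x = f x) →
        ∀ τ : ℝ, 0 < τ → |mittagKernel a 2 (σ + θ) τ| ≤ (M / θ + 2 * M) / Real.Gamma θ := by
      intro σ θ M hσ hθ0 hθ1 F f hF hf hFM hfM hK τ hτ
      have hΓ := Real.Gamma_pos_of_pos hθ0
      rw [← mittag_conv_rpow ha (by norm_num : (0 : ℝ) < 2) hσ hθ0 hτ]
      simp_rw [hK, mul_div_assoc']
      rw [intervalIntegral.integral_div, abs_div, abs_of_pos hΓ]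
      gcongr
      exact conv_rpow_bound hθ0 hθ1 hτ hF hf hFM hfM
    rcases le_or_gt κ 2 with h2 | h2
    · refine ⟨((1 + 1 / √a) / (κ - 1) + 2 * (1 + 1 / √a)) / Real.Gamma (κ - 1), fun τ hτ => ?_⟩
      have := key 1 (κ - 1) (1 + 1 / √a) le_rfl (by linarith) (by linarith)
        (fun x => Real.sin (√a * x) / √a) (fun x => Real.cos (√a * x)) (fun x => ?_) (by fun_prop)
        (fun x => ?_) (fun x => ?_) (mittag_two_one ha) τ hτ
      · rwa [show 1 + (κ - 1) = κ by ring] at this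
      · have hd : HasDerivAt (fun y : ℝ => √a * y) √a x := by
          simpa using (hasDerivAt_id' x).const_mul (√a)
        have := hd.sin.div_const (√a)
        rwa [mul_div_cancel_right₀ _ hs.ne'] at this
      · rw [abs_div, abs_of_pos hs]
        have : |Real.sin (√a * x)| / √a ≤ 1 / √a := by
          gcongr
          exact Real.abs_sin_le_one _
        linarith
      · have := Real.abs_cos_le_one (√a * x)
        have : 0 < 1 / √a := by positivity
        linarith
    · refine ⟨((1 / a + 1 / √a) / (κ - 2) + 2 * (1 / a + 1 / √a)) / Real.Gamma (κ - 2), fun τ hτ => ?_⟩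
      have := key 2 (κ - 2) (1 / a + 1 / √a) one_le_two (by linarith) (by linarith)
        (fun x => -Real.cos (√a * x) / a) (fun x => Real.sin (√a * x) / √a) (fun x => ?_) (by fun_prop)
        (fun x => ?_) (fun x => ?_) (mittag_two_two ha) τ hτ
      · rwa [show 2 + (κ - 2) = κ by ring] at this
      · have hd : HasDerivAt (fun y : ℝ => √a * y) √a x := by
          simpa using (hasDerivAt_id' x).const_mul (√a)
        have := hd.cos.fun_neg.div_const a
        have e : -(-Real.sin (√a * x) * √a) / a = Real.sin (√a * x) / √a := by
          rw [div_eq_div_iff ha.ne' hs.ne']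
          linear_combination Real.sin (√a * x) * Real.mul_self_sqrt ha.le
        rwa [e] at this
      · rw [abs_div, abs_of_pos ha, abs_neg]
        have : |Real.cos (√a * x)| / a ≤ 1 / a := by
          gcongr
          exact Real.abs_cos_le_one _
        have : 0 < 1 / √a := by positivity
        linarith
      · rw [abs_div, abs_of_pos hs]
        have : |Real.sin (√a * x)| / √a ≤ 1 / √a := by
          gcongr
          exact Real.abs_sin_le_one _
        have : 0 < 1 / a := by positivity
        linarith
  · have hθ : 0 < κ - 3 := by linarith
    have hΓ := Real.Gamma_pos_of_pos hθ
    refine ⟨2 / a / Real.Gamma (κ - 3) / (κ - 3), fun τ hτ => ?_⟩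
    rw [max_eq_right (by linarith), show κ - 2 - 1 = κ - 3 by ring]
    have h := mittag_conv_rpow ha (by norm_num : (0 : ℝ) < 2) (by norm_num : (1 : ℝ) ≤ 3) hθ hτ
    rw [show 3 + (κ - 3) = κ by ring] at h
    rw [← h]
    have h1 : ‖∫ s in (0:ℝ)..τ, mittagKernel a 2 3 (τ - s) * (s ^ (κ - 3 - 1) / Real.Gamma (κ - 3))‖
        ≤ ∫ s in (0:ℝ)..τ, 2 / a / Real.Gamma (κ - 3) * s ^ (κ - 3 - 1) := by
      refine intervalIntegral.norm_integral_le_of_norm_le hτ.le ?_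
        ((intervalIntegral.intervalIntegrable_rpow' (by linarith)).const_mul _)
      refine ae_of_all _ fun s hs => ?_
      have hs0 := hs.1
      rw [norm_mul, Real.norm_eq_abs, Real.norm_of_nonneg (by positivity)]
      calc |mittagKernel a 2 3 (τ - s)| * (s ^ (κ - 3 - 1) / Real.Gamma (κ - 3))
          ≤ 2 / a * (s ^ (κ - 3 - 1) / Real.Gamma (κ - 3)) := by
            gcongr
            exact abs_mittag_two_three_le ha (by linarith [hs.2])
        _ = _ := by ring
    rw [intervalIntegral.integral_const_mul, integral_rpow (Or.inl (by linarith)),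
      sub_add_cancel, Real.zero_rpow hθ.ne', sub_zero] at h1
    refine h1.trans_eq ?_
    ring

/-- For the order `α = 2μ` and the index `α + β`, the hypothesis `3μ ≤ σ` is exactly `α / 2 ≤ β`. -/
lemma mittag_nonneg {μ a σ t : ℝ} (hμ0 : 0 < μ) (hμ1 : μ < 1) (ha : 0 < a) (hσ : 3 * μ ≤ σ)
    (ht : 0 < t) : 0 ≤ mittagKernel a (2 * μ) σ t := by
  have hκ : 3 ≤ σ / μ := by rwa [le_div_iff₀ hμ0]
  have h := subordination (κ := σ / μ) (η := 1) (C := 0) (e := 1) hμ0 hμ1 ha (by linarith) one_pos ht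
    (fun τ hτ => by simpa using mittag_two_nonneg ha hκ hτ)
  simpa [mul_div_cancel₀ _ hμ0.ne'] using h

/-- Both signs of the order-`2` bound are transferred by subordination. -/
lemma mittag_bound {μ a σ : ℝ} (hμ0 : 0 < μ) (hμ1 : μ < 1) (ha : 0 < a) (hσ : μ < σ) :
    ∃ C, ∀ t : ℝ, 0 < t → |mittagKernel a (2 * μ) σ t| ≤ C * t ^ (max μ (σ - 2 * μ) - 1) := by
  have hκ : 1 < σ / μ := by rwa [lt_div_iff₀ hμ0, one_mul]
  obtain ⟨C, hC⟩ := mittag_two_bound ha hκ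
  set η := max 1 (σ / μ - 2) with hη
  have hη0 : 0 < η := lt_of_lt_of_le one_pos (le_max_left _ _)
  have hμη : μ * η = max μ (σ - 2 * μ) := by
    rw [hη, mul_max_of_nonneg _ _ hμ0.le, mul_one, mul_sub, mul_div_cancel₀ _ hμ0.ne', mul_comm μ 2]
  refine ⟨C * Real.Gamma η / Real.Gamma (μ * η), fun t ht => ?_⟩
  have h : ∀ e : ℝ, |e| = 1 → 0 ≤ C * Real.Gamma η / Real.Gamma (μ * η) * t ^ (μ * η - 1)
      + e * mittagKernel a (2 * μ) (μ * (σ / μ)) t := by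
    intro e he
    refine subordination hμ0 hμ1 ha (by linarith) hη0 ht fun τ hτ => ?_
    have h1 := hC τ hτ
    have h2 : |e * mittagKernel a 2 (σ / μ) τ| = |mittagKernel a 2 (σ / μ) τ| := by
      rw [abs_mul, he, one_mul]
    linarith [neg_abs_le (e * mittagKernel a 2 (σ / μ) τ)]
  rw [mul_div_cancel₀ _ hμ0.ne'] at h
  rw [← hμη, abs_le]
  constructor
  · linarith [h 1 (by simp)]
  · linarith [h (-1) (by simp)]

/-! ### Riemann–Liouville integrals -/

lemma rlInt_congr {σ t : ℝ} {f g : ℝ → ℝ} (ht : 0 ≤ t) (h : ∀ s ∈ Set.Ioo 0 t, f s = g s) :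
    rlInt σ f t = rlInt σ g t := by
  unfold rlInt
  congr 1
  rw [intervalIntegral.integral_of_le ht, intervalIntegral.integral_of_le ht,
    integral_Ioc_eq_integral_Ioo, integral_Ioc_eq_integral_Ioo]
  exact setIntegral_congr_fun measurableSet_Ioo fun s hs => by simp only [h s hs]

lemma rlInt_one (f : ℝ → ℝ) (t : ℝ) : rlInt 1 f t = ∫ s in (0:ℝ)..t, f s := by
  simp [rlInt]

/-- The semigroup law, by Fubini and the beta integral. The condition `1 ≤ x + y` makes the composed
kernel bounded, so that the identity holds at every `t` for any integrable `f`. -/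
lemma rlInt_semigroup {x y t : ℝ} (hx : 0 < x) (hy : 0 < y) (hxy : 1 ≤ x + y) (ht : 0 < t)
    {f : ℝ → ℝ} (hf : IntervalIntegrable f volume 0 t) :
    rlInt x (rlInt y f) t = rlInt (x + y) f t := by
  have hΓx := (Real.Gamma_pos_of_pos hx).ne'
  have hΓy := (Real.Gamma_pos_of_pos hy).ne'
  have hΓxy := (Real.Gamma_pos_of_pos (add_pos hx hy)).ne'
  set B : ℝ := Real.Gamma x * Real.Gamma y / Real.Gamma (x + y) with hB
  set S : Set (ℝ × ℝ) := {p | p.2 < p.1} with hS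
  set k : ℝ × ℝ → ℝ := S.indicator fun p => (t - p.1) ^ (x - 1) * (p.1 - p.2) ^ (y - 1) with hk
  have hSm : MeasurableSet S := measurableSet_lt measurable_snd measurable_fst
  have hkm : Measurable k := Measurable.indicator (by fun_prop) hSm
  set ν := volume.restrict (Set.Ioo 0 t) with hν
  have hfν : Integrable f ν := by
    rw [hν]; exact (intervalIntegrable_iff_integrableOn_Ioo_of_le ht.le).1 hf
  have hksec : ∀ r s, k (s, r) = (Set.Ioi r).indicator
      (fun s => (t - s) ^ (x - 1) * (s - r) ^ (y - 1)) s := fun r s => rfl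
  have hinter : ∀ r ∈ Set.Ioo 0 t, Set.Ioo 0 t ∩ Set.Ioi r = Set.Ioo r t := by
    intro r hr
    ext s
    simp only [Set.mem_inter_iff, Set.mem_Ioo, Set.mem_Ioi]
    exact ⟨fun h => ⟨h.2, h.1.2⟩, fun h => ⟨⟨hr.1.trans h.1, h.2⟩, h.1⟩⟩
  have hk0 : ∀ r ∈ Set.Ioo 0 t, ∀ s ∈ Set.Ioo 0 t, 0 ≤ k (s, r) := by
    intro r hr s hs
    rw [hksec]
    refine Set.indicator_apply_nonneg fun h => ?_
    have h1 : 0 ≤ t - s := by linarith [hs.2]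
    have h2 : 0 ≤ s - r := by linarith [Set.mem_Ioi.1 h]
    positivity
  have hkint : ∀ r ∈ Set.Ioo 0 t, Integrable (fun s => k (s, r)) ν := by
    intro r hr
    have h := (beta_interval_integrable hx hy (sub_pos.2 hr.2)).comp_sub_right r
    rw [zero_add, sub_add_cancel, intervalIntegrable_iff_integrableOn_Ioo_of_le hr.2.le] at h
    simp only [hksec]
    rw [hν, integrable_indicator_iff measurableSet_Ioi, IntegrableOn,
      Measure.restrict_restrict measurableSet_Ioi, Set.inter_comm, hinter r hr]
    refine IntegrableOn.congr_fun h (fun s _ => ?_) measurableSet_Ioo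
    rw [show t - r - (s - r) = t - s by ring]
  have hkval : ∀ r ∈ Set.Ioo 0 t, ∫ s, k (s, r) ∂ν = B * (t - r) ^ (x + y - 1) := by
    intro r hr
    simp only [hksec]
    rw [hν, setIntegral_indicator measurableSet_Ioi, hinter r hr, ← integral_Ioc_eq_integral_Ioo,
      ← intervalIntegral.integral_of_le hr.2.le]
    have h := intervalIntegral.integral_comp_sub_right (a := r) (b := t)
      (fun s => (t - r - s) ^ (x - 1) * s ^ (y - 1)) r
    rw [sub_self, beta_interval_integral hx hy (sub_pos.2 hr.2)] at h
    rw [hB, ← h]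
    refine intervalIntegral.integral_congr fun s _ => ?_
    rw [show t - r - (s - r) = t - s by ring]
  have hcont : ContinuousOn (fun r : ℝ => B * (t - r) ^ (x + y - 1)) (Set.uIcc 0 t) := by
    refine ContinuousOn.mul continuousOn_const (ContinuousOn.rpow_const (by fun_prop) fun s _ =>
      Or.inr (by linarith))
  have hint : Integrable (fun p : ℝ × ℝ => k p * f p.2) (ν.prod ν) := by
    have hms : AEStronglyMeasurable (fun p : ℝ × ℝ => k p * f p.2) (ν.prod ν) :=
      hkm.aestronglyMeasurable.mul hfν.aestronglyMeasurable.comp_snd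
    rw [integrable_prod_iff' hms]
    constructor
    · rw [hν]
      refine (ae_restrict_iff' measurableSet_Ioo).2 (ae_of_all _ fun r hr => ?_)
      exact (hkint r hr).mul_const (f r)
    · have h1 : Integrable (fun r => B * (t - r) ^ (x + y - 1) * |f r|) ν := by
        rw [hν]
        exact (intervalIntegrable_iff_integrableOn_Ioo_of_le ht.le).1 (hf.abs.continuousOn_mul hcont)
      refine h1.congr ?_
      rw [hν]
      refine (ae_restrict_iff' measurableSet_Ioo).2 (ae_of_all _ fun r hr => ?_)
      simp only [norm_mul, Real.norm_eq_abs]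
      rw [integral_mul_const, ← hkval r hr]
      congr 1
      refine setIntegral_congr_fun measurableSet_Ioo fun s hs => ?_
      rw [abs_of_nonneg (hk0 r hr s hs)]
  have hswap := integral_integral_swap (f := fun s r => k (s, r) * f r) hint
  have hR : ∫ r, ∫ s, k (s, r) * f r ∂ν ∂ν = B * ∫ r in (0:ℝ)..t, (t - r) ^ (x + y - 1) * f r := by
    rw [intervalIntegral.integral_of_le ht.le, integral_Ioc_eq_integral_Ioo, ← integral_const_mul]
    refine setIntegral_congr_fun measurableSet_Ioo fun r hr => ?_
    rw [integral_mul_const, hkval r hr, mul_assoc]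
  have hL : ∫ s, ∫ r, k (s, r) * f r ∂ν ∂ν
      = Real.Gamma y * ∫ s in (0:ℝ)..t, (t - s) ^ (x - 1) * rlInt y f s := by
    rw [intervalIntegral.integral_of_le ht.le, integral_Ioc_eq_integral_Ioo, ← integral_const_mul]
    refine setIntegral_congr_fun measurableSet_Ioo fun s hs => ?_
    simp only [rlInt]
    have e : ∀ r, k (s, r) * f r = (Set.Iio s).indicator
        (fun r => (t - s) ^ (x - 1) * ((s - r) ^ (y - 1) * f r)) r := by
      intro r
      by_cases h : r < s
      · rw [Set.indicator_of_mem (Set.mem_Iio.2 h), hksec, Set.indicator_of_mem (Set.mem_Ioi.2 h),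
          mul_assoc]
      · rw [Set.indicator_of_notMem (s := Set.Iio s) h, hksec,
          Set.indicator_of_notMem (s := Set.Ioi r) h,
          zero_mul]
    have hi : Set.Ioo 0 t ∩ Set.Iio s = Set.Ioo 0 s := by
      ext r
      simp only [Set.mem_inter_iff, Set.mem_Ioo, Set.mem_Iio]
      exact ⟨fun h => ⟨h.1.1, h.2⟩, fun h => ⟨⟨h.1, h.2.trans hs.2⟩, h.2⟩⟩
    simp only [e]
    rw [hν, setIntegral_indicator measurableSet_Iio, hi, integral_const_mul,
      intervalIntegral.integral_of_le hs.1.le, integral_Ioc_eq_integral_Ioo]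
    field_simp
  rw [hL, hR] at hswap
  rw [rlInt, rlInt]
  field_simp
  rw [hB] at hswap
  field_simp at hswap
  linarith

/-- Rescaling to a fixed interval, from which continuity in `t` follows by dominated convergence. -/
lemma rlInt_scaled {σ t : ℝ} (hσ : 0 < σ) (ht : 0 ≤ t) (f : ℝ → ℝ) :
    rlInt σ f t = t ^ σ / Real.Gamma σ * ∫ u in (0:ℝ)..1, (1 - u) ^ (σ - 1) * f (t * u) := by
  rcases ht.eq_or_lt with rfl | ht
  · simp [rlInt, Real.zero_rpow hσ.ne']
  · have h := intervalIntegral.integral_comp_mul_left (a := 0) (b := 1)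
      (fun s => (t - s) ^ (σ - 1) * f s) ht.ne'
    rw [mul_zero, mul_one, smul_eq_mul, inv_mul_eq_div, eq_div_iff ht.ne'] at h
    rw [rlInt, ← h]
    have e : ∫ u in (0:ℝ)..1, (t - t * u) ^ (σ - 1) * f (t * u)
        = t ^ (σ - 1) * ∫ u in (0:ℝ)..1, (1 - u) ^ (σ - 1) * f (t * u) := by
      rw [← intervalIntegral.integral_const_mul]
      refine intervalIntegral.integral_congr fun u hu => ?_
      rw [Set.uIcc_of_le zero_le_one] at hu
      rw [show t - t * u = t * (1 - u) by ring, Real.mul_rpow ht.le (by linarith [hu.2]), mul_assoc]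
    rw [e, Real.rpow_sub_one ht.ne']
    field_simp

lemma rlInt_continuousOn {σ : ℝ} (hσ : 0 < σ) {f : ℝ → ℝ} (hf : Continuous f) :
    ContinuousOn (rlInt σ f) (Set.Ici 0) := by
  have hJ : Continuous fun t : ℝ => ∫ u in (0:ℝ)..1, (1 - u) ^ (σ - 1) * f (t * u) := by
    rw [continuous_iff_continuousAt]
    intro t₀
    obtain ⟨M, hM⟩ := (isCompact_Icc (a := -(|t₀| + 1)) (b := |t₀| + 1)).exists_bound_of_continuousOn
      hf.continuousOn
    have hk : IntervalIntegrable (fun u : ℝ => (1 - u) ^ (σ - 1)) volume 0 1 := by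
      simpa using beta_interval_integrable hσ one_pos one_pos
    refine intervalIntegral.continuousAt_of_dominated_interval
      (bound := fun u => (1 - u) ^ (σ - 1) * M) ?_ ?_ (hk.mul_const _) ?_
    · refine Eventually.of_forall fun t => Measurable.aestronglyMeasurable ?_
      have := hf.measurable
      fun_prop
    · filter_upwards [Metric.ball_mem_nhds t₀ one_pos] with t ht
      refine ae_of_all _ fun u hu => ?_
      rw [Set.uIoc_of_le zero_le_one] at hu
      have h1 : 0 ≤ 1 - u := by linarith [hu.2]
      rw [norm_mul, Real.norm_of_nonneg (by positivity)]
      gcongr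
      refine hM _ (abs_le.1 ?_)
      rw [abs_mul, abs_of_pos hu.1]
      have h2 : |t| ≤ |t₀| + 1 := by
        rw [Metric.mem_ball, Real.dist_eq] at ht
        have := abs_sub_abs_le_abs_sub t t₀
        linarith
      have := abs_nonneg t
      nlinarith [hu.2]
    · refine ae_of_all _ fun u _ => ?_
      fun_prop
  refine ContinuousOn.congr (f := fun t : ℝ => t ^ σ / Real.Gamma σ *
    ∫ u in (0:ℝ)..1, (1 - u) ^ (σ - 1) * f (t * u)) ?_ fun t ht => rlInt_scaled hσ ht f
  refine ContinuousOn.mul (Continuous.continuousOn ?_) hJ.continuousOn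
  exact (Real.continuous_rpow_const hσ.le).div_const _

lemma rlInt_intervalIntegrable {σ t : ℝ} (hσ : 0 < σ) (ht : 0 ≤ t) {f : ℝ → ℝ} (hf : Continuous f) :
    IntervalIntegrable (rlInt σ f) volume 0 t := by
  refine ContinuousOn.intervalIntegrable ((rlInt_continuousOn hσ hf).mono ?_)
  rw [Set.uIcc_of_le ht]
  exact fun s hs => hs.1

/-! ### Variation of constants -/

/-- Inversion of the Caputo derivative. With `x = I^{2-α} w'`, the function `capKernel α w` is a
primitive of `x`, so `x = I^1 (D^α w)` by absolute continuity, and applying `I^{α-1}` to `x` gives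
`I^1 w'`. -/
lemma sub_eq_rlInt_caputoD {α : ℝ} {w : ℝ → ℝ} (hα1 : 1 < α) (hα2 : α < 2)
    (hw : ContDiff ℝ 1 w) (hAC : ∀ T > (0:ℝ), AC2On (capKernel α w) T) (hw' : deriv w 0 = 0)
    {t : ℝ} (ht : 0 < t) : w t - w 0 = rlInt α (caputoD α w) t := by
  have hdw : Continuous (deriv w) := hw.continuous_deriv le_rfl
  have hdwi : ∀ s, IntervalIntegrable (deriv w) volume 0 s := fun s => hdw.intervalIntegrable _ _
  have hwd : ∀ s, w s - w 0 = rlInt 1 (deriv w) s := by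
    intro s
    rw [rlInt_one, intervalIntegral.integral_deriv_eq_sub (fun x _ => hw.differentiable one_ne_zero x)
      (hdwi s)]
  set x : ℝ → ℝ := rlInt (2 - α) (deriv w) with hx
  have h2α : 0 < 2 - α := by linarith
  have hxc : ContinuousOn x (Set.Ici 0) := rlInt_continuousOn h2α hdw
  -- A continuous extension of `x` to the whole line, for the fundamental theorem of calculus.
  set y : ℝ → ℝ := fun s => x (max s 0) with hy
  have hyc : Continuous y := hxc.comp_continuous (by fun_prop) fun s => Set.mem_Ici.2 (le_max_right _ _)
  have hyx : ∀ s, 0 ≤ s → y s = x s := fun s hs => by simp only [hy, max_eq_left hs]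
  have hG : ∀ s, 0 < s → capKernel α w s = ∫ r in (0:ℝ)..s, y r := by
    intro s hs
    have e : (fun s => w s - deriv w 0 * s - w 0) = rlInt 1 (deriv w) := by
      funext r
      rw [← hwd, hw']
      ring
    rw [capKernel, if_neg hα2.ne, e, rlInt_semigroup h2α one_pos (by linarith) hs (hdwi s), add_comm,
      ← rlInt_semigroup one_pos h2α (by linarith) hs (hdwi s), ← rlInt_one]
    exact rlInt_congr hs.le fun r hr => (hyx r hr.1.le).symm
  have hdG : ∀ s, 0 < s → deriv (capKernel α w) s = y s := by
    intro s hs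
    have : capKernel α w =ᶠ[nhds s] fun s => ∫ r in (0:ℝ)..s, y r := by
      filter_upwards [Ioi_mem_nhds hs] with r hr using hG r hr
    rw [this.deriv_eq]
    exact hyc.deriv_integral y 0 s
  have hh : ∀ s, 0 < s → IntervalIntegrable (caputoD α w) volume 0 s := fun s hs => (hAC s hs).2.1
  have hfund : ∀ s, 0 < s → y s = deriv (capKernel α w) 0 + ∫ r in (0:ℝ)..s, caputoD α w r := by
    intro s hs
    rw [← hdG s hs]
    exact (hAC s hs).2.2 s ⟨hs.le, le_rfl⟩
  -- Letting `s → 0+` in the previous identity identifies the constant of integration.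
  have hzero : deriv (capKernel α w) 0 = 0 := by
    have l1 : Tendsto y (nhdsWithin 0 (Set.Ioi 0)) (nhds 0) := by
      have := (hyc.tendsto 0).mono_left (nhdsWithin_le_nhds (s := Set.Ioi 0))
      rwa [hyx 0 le_rfl, hx, show rlInt (2 - α) (deriv w) 0 = 0 by simp [rlInt]] at this
    have l2 : Tendsto (fun s => ∫ r in (0:ℝ)..s, caputoD α w r) (nhdsWithin 0 (Set.Ioi 0))
        (nhds 0) := by
      have hc := intervalIntegral.continuousOn_primitive_interval' (hh 1 one_pos)
        (Set.left_mem_uIcc) 0 Set.left_mem_uIcc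
      rw [Set.uIcc_of_le zero_le_one, ContinuousWithinAt, intervalIntegral.integral_same] at hc
      refine hc.mono_left ?_
      rw [← nhdsWithin_Ioc_eq_nhdsGT one_pos]
      exact nhdsWithin_mono _ Set.Ioc_subset_Icc_self
    have l3 := (tendsto_const_nhds (x := deriv (capKernel α w) 0)).add l2
    have l4 : Tendsto y (nhdsWithin 0 (Set.Ioi 0)) (nhds (deriv (capKernel α w) 0 + 0)) := by
      refine l3.congr' ?_
      filter_upwards [self_mem_nhdsWithin] with s hs using (hfund s hs).symm
    have := tendsto_nhds_unique l4 l1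
    linarith
  calc w t - w 0 = rlInt (α - 1 + (2 - α)) (deriv w) t := by
        rw [hwd, show α - 1 + (2 - α) = 1 by ring]
    _ = rlInt (α - 1) x t :=
        (rlInt_semigroup (by linarith) h2α (by linarith) ht (hdwi t)).symm
    _ = rlInt (α - 1) (rlInt 1 (caputoD α w)) t := by
        refine rlInt_congr ht.le fun s hs => ?_
        rw [← hyx s hs.1.le, hfund s hs.1, hzero, zero_add, rlInt_one]
    _ = rlInt α (caputoD α w) t := by
        rw [rlInt_semigroup (by linarith) one_pos (by linarith) ht (hh t ht), sub_add_cancel]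

lemma rlInt_sub_const {σ t c : ℝ} (hσ : 0 < σ) (ht : 0 < t) {f : ℝ → ℝ} (hf : Continuous f) :
    rlInt σ (fun s => f s - c) t = rlInt σ f t - c * (t ^ σ / Real.Gamma (σ + 1)) := by
  have h1 := rlInt_rpow hσ one_pos ht
  have hk : IntervalIntegrable (fun u : ℝ => (t - u) ^ (σ - 1)) volume 0 t := by
    simpa using beta_interval_integrable hσ one_pos ht
  simp only [sub_self, Real.rpow_zero, Real.Gamma_one, div_one, add_sub_cancel_right] at h1
  rw [← h1]
  simp only [rlInt, mul_sub, mul_one]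
  rw [intervalIntegral.integral_sub (hk.mul_continuousOn hf.continuousOn) (hk.mul_const c),
    intervalIntegral.integral_mul_const]
  ring

/-- Variation of constants for `D^{2μ} w + a w = f`, after applying `I^β`: inserting
`I^{2μ} h = w - w₀` into the series of the convolution makes it telescope. -/
lemma rlInt_eq_mittag {μ β a t w₀ : ℝ} {w h : ℝ → ℝ} (hμ : 1 < 2 * μ) (hβ : 0 < β) (ha : 0 < a)
    (hw : Continuous w) (hh : IntervalIntegrable h volume 0 t) (ht : 0 < t)
    (hrep : ∀ s ∈ Set.Ioo 0 t, w s - w₀ = rlInt (2 * μ) h s) :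
    rlInt β w t = w₀ * mittagKernel a (2 * μ) (β + 1) t
      + ∫ s in (0:ℝ)..t, mittagKernel a (2 * μ) (2 * μ + β) (t - s) * (h s + a * w s) := by
  have hμ0 : 0 < 2 * μ := by linarith
  have hwi : IntervalIntegrable w volume 0 t := hw.intervalIntegrable _ _
  have hσ : 1 ≤ 2 * μ + β := by linarith
  set B : ℕ → ℝ := fun j => (-a) ^ j * rlInt (β + 2 * μ * j) w t with hB
  have hBs : Summable B := by
    rw [← summable_nat_add_iff 1]
    have h1 := (hasSum_mittag_conv ha hμ0 hσ ht hwi).1.summable.mul_left (-a)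
    have e : (fun j => B (j + 1)) = fun j : ℕ => -a * ((-a) ^ j * rlInt (2 * μ + β + 2 * μ * j) w t) := by
      funext j
      simp only [hB]
      push_cast
      rw [show β + 2 * μ * ((j : ℝ) + 1) = 2 * μ + β + 2 * μ * j by ring]
      ring
    rw [e]
    exact h1
  have hB1 := (hasSum_nat_add_iff' 1).2 hBs.hasSum
  have hM := (hasSum_mittag ha hμ0 (by linarith : 0 < β + 1) ht).mul_left w₀
  have hF := (hasSum_mittag_conv ha hμ0 hσ ht (hh.add (hwi.const_mul a))).1
  have hterm : ∀ j : ℕ, (-a) ^ j * rlInt (2 * μ + β + 2 * μ * j) (fun s => h s + a * w s) t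
      = B j - B (j + 1) - w₀ * ((-a) ^ j * (t ^ (β + 1 + 2 * μ * j - 1)
        / Real.Gamma (β + 1 + 2 * μ * j))) := by
    intro j
    have hj : (0 : ℝ) ≤ 2 * μ * j := by positivity
    have hc : ContinuousOn (fun s : ℝ => (t - s) ^ (2 * μ + β + 2 * μ * j - 1)) (Set.uIcc 0 t) :=
      ContinuousOn.rpow_const (by fun_prop) fun s _ => Or.inr (by linarith)
    have h1 : rlInt (2 * μ + β + 2 * μ * j) (fun s => h s + a * w s) t
        = rlInt (2 * μ + β + 2 * μ * j) h t + a * rlInt (2 * μ + β + 2 * μ * j) w t := by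
      simp only [rlInt, mul_add]
      rw [intervalIntegral.integral_add (hh.continuousOn_mul hc)
        ((hwi.const_mul a).continuousOn_mul hc)]
      have : ∀ s : ℝ, (t - s) ^ (2 * μ + β + 2 * μ * j - 1) * (a * w s)
          = a * ((t - s) ^ (2 * μ + β + 2 * μ * j - 1) * w s) := fun s => by ring
      simp_rw [this]
      rw [intervalIntegral.integral_const_mul]
      ring
    have h2 : rlInt (2 * μ + β + 2 * μ * j) h t
        = rlInt (β + 2 * μ * j) w t - w₀ * (t ^ (β + 2 * μ * j) / Real.Gamma (β + 2 * μ * j + 1)) := by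
      rw [← rlInt_sub_const (by positivity) ht hw, rlInt_congr ht.le hrep,
        rlInt_semigroup (by positivity) hμ0 (by linarith) ht hh]
      congr 1
      ring
    rw [h1, h2]
    simp only [hB]
    push_cast
    rw [show β + 1 + 2 * μ * (j : ℝ) - 1 = β + 2 * μ * j by ring,
      show β + 1 + 2 * μ * (j : ℝ) = β + 2 * μ * j + 1 by ring,
      show β + 2 * μ * ((j : ℝ) + 1) = 2 * μ + β + 2 * μ * j by ring]
    ring
  have hS := (hBs.hasSum.sub hB1).sub hM
  have hFeq := hF.unique (hS.congr_fun (fun j => hterm j))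
  rw [Finset.sum_range_one] at hFeq
  have hB0 : B 0 = rlInt β w t := by simp [hB]
  rw [hB0] at hFeq
  rw [hFeq]
  ring

/-! ### Lower bounds and the conclusion -/

lemma eventually_const_mul_rpow_le {C δ ε : ℝ} (hδ : δ < 0) (hε : 0 < ε) :
    ∀ᶠ t : ℝ in atTop, C * t ^ δ ≤ ε := by
  have h := (tendsto_rpow_neg_atTop (y := -δ) (by linarith)).const_mul C
  rw [neg_neg, mul_zero] at h
  exact (h.eventually_lt_const hε).mono fun t ht => ht.le

/-- By `mittag_rec`, `a` times the kernel of index `ν + 2μ` is `t ^ (ν - 1) / Γ(ν)` minus the kernel of index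
`ν`, which is of lower order. -/
lemma mittag_lower {μ a ν : ℝ} (hμ0 : 0 < μ) (hμ1 : μ < 1) (ha : 0 < a) (hν : μ < ν) :
    ∃ c > 0, ∃ T > 0, ∀ t ≥ T, c * t ^ (ν - 1) ≤ mittagKernel a (2 * μ) (ν + 2 * μ) t := by
  obtain ⟨C, hC⟩ := mittag_bound hμ0 hμ1 ha hν
  have hν0 : 0 < ν := hμ0.trans hν
  have hΓ := Real.Gamma_pos_of_pos hν0
  have hδ : max μ (ν - 2 * μ) - ν < 0 := by
    rw [sub_neg]
    exact max_lt hν (by linarith)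
  obtain ⟨T, hT⟩ := eventually_atTop.1 (eventually_const_mul_rpow_le (C := C) hδ
    (by positivity : 0 < 1 / (2 * Real.Gamma ν)))
  refine ⟨1 / (2 * Real.Gamma ν) / a, by positivity, max T 1, by positivity, fun t ht => ?_⟩
  have ht0 : 0 < t := lt_of_lt_of_le one_pos ((le_max_right _ _).trans ht)
  have h1 := hT t ((le_max_left _ _).trans ht)
  have h2 := hC t ht0
  have h3 := mittag_rec ha (by positivity : 0 < 2 * μ) hν0 ht0
  have h4 : C * t ^ (max μ (ν - 2 * μ) - 1) ≤ 1 / (2 * Real.Gamma ν) * t ^ (ν - 1) := by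
    rw [show max μ (ν - 2 * μ) - 1 = (max μ (ν - 2 * μ) - ν) + (ν - 1) by ring, Real.rpow_add ht0,
      ← mul_assoc]
    gcongr
  have h5 : t ^ (ν - 1) / Real.Gamma ν = 2 * (1 / (2 * Real.Gamma ν) * t ^ (ν - 1)) := by
    field_simp
  rw [div_mul_eq_mul_div, div_le_iff₀ ha, mul_comm _ a, h3]
  linarith [le_abs_self (mittagKernel a (2 * μ) ν t)]

lemma sub_rpow_lower {x t s : ℝ} (ht : 0 < t) (hs0 : 0 ≤ s) (hs : 2 * s ≤ t) :
    min 1 ((1 / 2 : ℝ) ^ x) * t ^ x ≤ (t - s) ^ x := by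
  have hp : 0 < t ^ x := by positivity
  rcases le_total 0 x with hx | hx
  · calc min 1 ((1 / 2 : ℝ) ^ x) * t ^ x ≤ (1 / 2 : ℝ) ^ x * t ^ x := by
          gcongr
          exact min_le_right _ _
      _ = (1 / 2 * t) ^ x := (Real.mul_rpow (by norm_num) ht.le).symm
      _ ≤ (t - s) ^ x := Real.rpow_le_rpow (by positivity) (by linarith) hx
  · calc min 1 ((1 / 2 : ℝ) ^ x) * t ^ x ≤ 1 * t ^ x := by
          gcongr
          exact min_le_left _ _
      _ = t ^ x := one_mul _
      _ ≤ (t - s) ^ x := Real.rpow_le_rpow_of_nonpos (by linarith) (by linarith) hx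

/-- The kernel being nonnegative, the convolution is at least its part over a fixed interval `[0, t₁]`
on which `φ` does not vanish identically; there `t - s` is comparable to `t`. -/
lemma conv_mittag_lower {μ a ν : ℝ} (hμ0 : 0 < μ) (hμ1 : μ < 1) (ha : 0 < a) (hν : μ < ν)
    (hν1 : 1 ≤ ν + 2 * μ) {φ : ℝ → ℝ} (hφ : Continuous φ) (hφ0 : ∀ s, 0 ≤ φ s)
    (hne : ∃ t, 0 ≤ t ∧ φ t ≠ 0) :
    ∃ c > 0, ∀ᶠ t : ℝ in atTop,
      c * t ^ (ν - 1) ≤ ∫ s in (0:ℝ)..t, mittagKernel a (2 * μ) (ν + 2 * μ) (t - s) * φ s := by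
  obtain ⟨c, hc, T, hT, hlow⟩ := mittag_lower hμ0 hμ1 ha hν
  obtain ⟨t₀, ht₀, hφt⟩ := hne
  set t₁ := t₀ + 1 with ht₁
  have ht₁0 : 0 < t₁ := by linarith
  have hΦ : 0 < ∫ s in (0:ℝ)..t₁, φ s :=
    intervalIntegral.integral_pos ht₁0 hφ.continuousOn (fun s _ => hφ0 s)
      ⟨t₀, ⟨ht₀, by linarith⟩, lt_of_le_of_ne (hφ0 _) hφt.symm⟩
  set d : ℝ := min 1 ((1 / 2 : ℝ) ^ (ν - 1)) with hd
  have hd0 : 0 < d := lt_min one_pos (by positivity)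
  refine ⟨c * d * ∫ s in (0:ℝ)..t₁, φ s, by positivity, ?_⟩
  filter_upwards [eventually_ge_atTop (2 * t₁), eventually_ge_atTop (2 * T)] with t h1 h2
  have ht0 : 0 < t := by linarith
  have hint := (hasSum_mittag_conv ha (by positivity : 0 < 2 * μ) hν1 ht0
    (hφ.intervalIntegrable 0 t)).2
  have ht₁t : t₁ ≤ t := by linarith
  have hint1 : IntervalIntegrable (fun s => mittagKernel a (2 * μ) (ν + 2 * μ) (t - s) * φ s)
      volume 0 t₁ := hint.mono_set (by
    rw [Set.uIcc_of_le ht0.le, Set.uIcc_of_le ht₁0.le]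
    exact Set.Icc_subset_Icc_right ht₁t)
  calc c * d * (∫ s in (0:ℝ)..t₁, φ s) * t ^ (ν - 1)
      = ∫ s in (0:ℝ)..t₁, c * d * t ^ (ν - 1) * φ s := by
        rw [intervalIntegral.integral_const_mul]
        ring
    _ ≤ ∫ s in (0:ℝ)..t₁, mittagKernel a (2 * μ) (ν + 2 * μ) (t - s) * φ s := by
        refine intervalIntegral.integral_mono_on ht₁0.le
          ((hφ.intervalIntegrable _ _).const_mul _) hint1 fun s hs => ?_
        have h3 := hlow (t - s) (by linarith [hs.2])
        have h4 := sub_rpow_lower (x := ν - 1) ht0 hs.1 (by linarith [hs.2])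
        refine mul_le_mul_of_nonneg_right (le_trans ?_ h3) (hφ0 s)
        rw [mul_assoc]
        exact mul_le_mul_of_nonneg_left h4 hc.le
    _ ≤ ∫ s in (0:ℝ)..t, mittagKernel a (2 * μ) (ν + 2 * μ) (t - s) * φ s := by
        rw [intervalIntegral.integral_of_le ht₁0.le, intervalIntegral.integral_of_le ht0.le,
          integral_Ioc_eq_integral_Ioo (y := t)]
        have hio := (intervalIntegrable_iff_integrableOn_Ioo_of_le ht0.le).1 hint
        refine setIntegral_mono_set hio ?_ ?_
        · refine (ae_restrict_iff' measurableSet_Ioo).2 (ae_of_all _ fun s hs => ?_)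
          exact mul_nonneg (mittag_nonneg hμ0 hμ1 ha (by linarith) (by linarith [hs.2])) (hφ0 s)
        · have hsub : Set.Ioc 0 t₁ ⊆ Set.Ioo 0 t := fun s hs => ⟨hs.1, by linarith [hs.2]⟩
          exact hsub.eventuallyLE

lemma mittag_conv_rlInt {a ρ σ γ t : ℝ} (ha : 0 < a) (hρ : 0 < ρ) (hσ : 1 ≤ σ) (hγ : 0 < γ)
    (ht : 0 < t) {φ : ℝ → ℝ} (hφ : Continuous φ) :
    ∫ s in (0:ℝ)..t, mittagKernel a ρ σ (t - s) * rlInt γ φ s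
      = ∫ s in (0:ℝ)..t, mittagKernel a ρ (σ + γ) (t - s) * φ s := by
  have h1 := (hasSum_mittag_conv ha hρ hσ ht (rlInt_intervalIntegrable hγ ht.le hφ)).1
  have h2 := (hasSum_mittag_conv ha hρ (by linarith : 1 ≤ σ + γ) ht (hφ.intervalIntegrable 0 t)).1
  refine h1.unique (h2.congr_fun fun j => ?_)
  have hj : (0 : ℝ) ≤ ρ * j := by positivity
  rw [rlInt_semigroup (by linarith) hγ (by linarith) ht (hφ.intervalIntegrable 0 t),
    show σ + ρ * j + γ = σ + γ + ρ * j by ring]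

/-- Corollary 2.5 (iii): for β ∈ [α/2, α), if w'(0) = 0 then liminf t^{1−γ−β} (₀I_t^β w)(t) > 0. -/
theorem cor_liminf_pos_iii
    (γ α p a b : ℝ) (w : ℝ → ℝ)
    (hγ : 0 < γ) (hα1 : 1 < α) (hα2 : α < 2) (hp : 1 < p) (ha : 0 < a) (hb : 0 < b)
    (hw : ContDiff ℝ 1 w)
    (hw0 : ∃ t : ℝ, 0 ≤ t ∧ w t ≠ 0)
    (hAC : ∀ T > (0:ℝ), AC2On (capKernel α w) T)
    (hineq : ∀ᵐ t ∂(volume.restrict (Set.Ici (0:ℝ))),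
      caputoD α w t + a * w t ≥ b * rlInt γ (fun s => |w s| ^ p) t)
    (β : ℝ) (hβ1 : α / 2 ≤ β) (hβ2 : β < α) (hw' : deriv w 0 = 0) :
    0 < liminf (fun t : ℝ => ((t ^ (1 - γ - β) * rlInt β w t : ℝ) : EReal)) atTop := by
  obtain ⟨μ, rfl⟩ : ∃ μ, α = 2 * μ := ⟨α / 2, by ring⟩
  rw [mul_div_cancel_left₀ _ (two_ne_zero' ℝ)] at hβ1
  have hμ0 : 0 < μ := by linarith
  have hμ1 : μ < 1 := by linarith
  have hβ0 : 0 < β := by linarith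
  set φ : ℝ → ℝ := fun s => |w s| ^ p with hφdef
  have hwc : Continuous w := hw.continuous
  have hφ : Continuous φ := hwc.abs.rpow_const fun s => Or.inr (by linarith)
  have hφ0 : ∀ s, 0 ≤ φ s := fun s => by positivity
  have hφne : ∃ t, 0 ≤ t ∧ φ t ≠ 0 := by
    obtain ⟨t, ht, hwt⟩ := hw0
    have : 0 < |w t| := abs_pos.2 hwt
    exact ⟨t, ht, by positivity⟩
  obtain ⟨c, hc, hlow⟩ := conv_mittag_lower (ν := β + γ) hμ0 hμ1 ha (by linarith) (by linarith)
    hφ hφ0 hφne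
  obtain ⟨C, hC⟩ := mittag_bound (σ := β + 1) hμ0 hμ1 ha (by linarith)
  have hδ : max μ (β + 1 - 2 * μ) - (β + γ) < 0 := by
    rw [sub_neg]
    exact max_lt (by linarith) (by linarith)
  have hsmall := eventually_const_mul_rpow_le (C := |w 0| * C) hδ
    (by positivity : 0 < b * c / 2)
  have key : ∀ᶠ t : ℝ in atTop, b * c / 2 ≤ t ^ (1 - γ - β) * rlInt β w t := by
    filter_upwards [hlow, hsmall, eventually_gt_atTop 0] with t h1 h2 ht
    have hh : IntervalIntegrable (caputoD (2 * μ) w) volume 0 t := (hAC t ht).2.1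
    have hwi : IntervalIntegrable w volume 0 t := hwc.intervalIntegrable _ _
    have hrep := rlInt_eq_mittag hα1 hβ0 ha hwc hh ht fun s hs =>
      sub_eq_rlInt_caputoD hα1 hα2 hw hAC hw' hs.1
    have hμ2 : 0 < 2 * μ := by linarith
    have hσ : 1 ≤ 2 * μ + β := by linarith
    have hmono : ∫ s in (0:ℝ)..t, mittagKernel a (2 * μ) (2 * μ + β) (t - s) * (b * rlInt γ φ s)
        ≤ ∫ s in (0:ℝ)..t, mittagKernel a (2 * μ) (2 * μ + β) (t - s)
          * (caputoD (2 * μ) w s + a * w s) := by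
      have i1 := (hasSum_mittag_conv ha hμ2 hσ ht
        ((rlInt_intervalIntegrable hγ ht.le hφ).const_mul b)).2
      have i2 := (hasSum_mittag_conv ha hμ2 hσ ht (hh.add (hwi.const_mul a))).2
      rw [intervalIntegral.integral_of_le ht.le, intervalIntegral.integral_of_le ht.le,
        integral_Ioc_eq_integral_Ioo, integral_Ioc_eq_integral_Ioo]
      refine setIntegral_mono_ae_restrict
        ((intervalIntegrable_iff_integrableOn_Ioo_of_le ht.le).1 i1)
        ((intervalIntegrable_iff_integrableOn_Ioo_of_le ht.le).1 i2) ?_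
      have hsub : Set.Ioo 0 t ⊆ Set.Ici (0 : ℝ) := fun s hs => hs.1.le
      filter_upwards [ae_restrict_of_ae_restrict_of_subset hsub hineq,
        ae_restrict_mem measurableSet_Ioo] with s h3 hs
      exact mul_le_mul_of_nonneg_left h3
        (mittag_nonneg hμ0 hμ1 ha (by linarith) (by linarith [hs.2]))
    have hconst : ∫ s in (0:ℝ)..t, mittagKernel a (2 * μ) (2 * μ + β) (t - s) * (b * rlInt γ φ s)
        = b * ∫ s in (0:ℝ)..t, mittagKernel a (2 * μ) (β + γ + 2 * μ) (t - s) * φ s := by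
      rw [show β + γ + 2 * μ = 2 * μ + β + γ by ring, ← mittag_conv_rlInt ha hμ2 hσ hγ ht hφ,
        ← intervalIntegral.integral_const_mul]
      refine intervalIntegral.integral_congr fun s _ => ?_
      ring
    have hpow : 0 < t ^ (1 - γ - β) := by positivity
    have hm : -(|w 0| * C * t ^ (max μ (β + 1 - 2 * μ) - 1))
        ≤ w 0 * mittagKernel a (2 * μ) (β + 1) t := by
      have h3 : |w 0 * mittagKernel a (2 * μ) (β + 1) t|
          ≤ |w 0| * (C * t ^ (max μ (β + 1 - 2 * μ) - 1)) := by
        rw [abs_mul]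
        exact mul_le_mul_of_nonneg_left (hC t ht) (abs_nonneg _)
      linarith [neg_abs_le (w 0 * mittagKernel a (2 * μ) (β + 1) t)]
    have hlow2 : b * (c * t ^ (β + γ - 1)) - |w 0| * C * t ^ (max μ (β + 1 - 2 * μ) - 1)
        ≤ rlInt β w t := by
      have := mul_le_mul_of_nonneg_left h1 hb.le
      linarith
    have e1 : t ^ (1 - γ - β) * t ^ (β + γ - 1) = 1 := by
      rw [← Real.rpow_add ht, show 1 - γ - β + (β + γ - 1) = 0 by ring, Real.rpow_zero]
    have e2 : t ^ (1 - γ - β) * t ^ (max μ (β + 1 - 2 * μ) - 1)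
        = t ^ (max μ (β + 1 - 2 * μ) - (β + γ)) := by
      rw [← Real.rpow_add ht]
      congr 1
      ring
    calc b * c / 2 ≤ b * c - |w 0| * C * t ^ (max μ (β + 1 - 2 * μ) - (β + γ)) := by linarith
      _ = t ^ (1 - γ - β) * (b * (c * t ^ (β + γ - 1))
          - |w 0| * C * t ^ (max μ (β + 1 - 2 * μ) - 1)) := by
          rw [← e2]
          linear_combination -(b * c) * e1
      _ ≤ _ := mul_le_mul_of_nonneg_left hlow2 hpow.le
  have hpos : (0 : EReal) < ((b * c / 2 : ℝ) : EReal) := by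
    exact_mod_cast (by positivity : 0 < b * c / 2)
  refine hpos.trans_le (le_liminf_of_le (by isBoundedDefault) ?_)
  filter_upwards [key] with t ht
  exact_mod_cast ht
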